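/- Let k and ℓ be fixed positive integers with 1 ≤ ℓ ≤ k and gcd(ℓ, k) = 1. Then there exists a constant C > 0 (depending on k) such that for all real x ≥ 16, |Σ_{2 ≤ n ≤ x, p(n) ≡ ℓ (mod k)} μ(n) ω(n)| ≤ C · x · (log log x)⁴ / log x, where the sum runs over integers 2 ≤ n ≤ x whose smallest prime factor p(n) is congruent to ℓ modulo k. -/

import Mathlib

open Finset ArithmeticFunction Real

open Finset ArithmeticFunction Real

namespace MOB
open Complex in
lemma zeta_cut_gt (N : ℕ) (hN : 1 ≤ N) {s : ℂ} (hs : 1 < s.re) :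
    riemannZeta s = ∑ n ∈ Icc 1 N, (n : ℂ) ^ (-s) + (N : ℂ) ^ (1 - s) / (s - 1)
      - s * ∫ t in Set.Ioi (N : ℝ), ((Int.fract t : ℝ) : ℂ) * (t : ℂ) ^ (-(s + 1)) := by
  have hs0 : s ≠ 0 := by rintro rfl; simp at hs; linarith
  have hs1 : s - 1 ≠ 0 := by
    intro h
    have : s = 1 := by linear_combination h
    rw [this] at hs; simp at hs
  have hN0 : (0:ℝ) < N := by exact_mod_cast hN
  set g : ℕ → ℂ := fun n => if n ≤ N then 0 else 1 with hg
  have hsum1 : LSeriesSummable 1 s := LSeriesSummable_one_iff.mpr hs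
  have hL : riemannZeta s = ∑ n ∈ Icc 1 N, (n : ℂ) ^ (-s) + LSeries g s := by
    rw [← LSeries_one_eq_riemannZeta hs]
    unfold LSeries
    have hg' : ∀ n, LSeries.term g s n = LSeries.term 1 s n - 
        (if n ∈ Icc 1 N then (n : ℂ) ^ (-s) else 0) := by
      intro n
      rcases Nat.eq_zero_or_pos n with rfl | hn
      · simp
      · simp only [LSeries.term_of_ne_zero hn.ne', hg, Finset.mem_Icc, Nat.succ_le_iff, hn, true_and]
        split_ifs <;> simp [Complex.cpow_neg]
    have hfin : HasSum (fun n : ℕ => if n ∈ Icc 1 N then (n : ℂ) ^ (-s) else 0)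
        (∑ n ∈ Icc 1 N, (n : ℂ) ^ (-s)) := by
      have := hasSum_sum_of_ne_finset_zero (L := .unconditional ℕ) (f := fun n : ℕ => if n ∈ Icc 1 N then (n : ℂ) ^ (-s) else 0) (s := Icc 1 N) (by intro b hb; simp only [if_neg hb])
      convert this using 1
      exact Finset.sum_congr rfl (fun n hn => by simp only [if_pos hn])
    have := (hsum1.hasSum.sub hfin).tsum_eq
    simp only [hg']
    rw [this]; ring
  have hcount : ∀ n : ℕ, ∑ k ∈ Icc 1 n, g k = ((n - N : ℕ) : ℂ) := by
    intro n
    induction n with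
    | zero => simp
    | succ n ih =>
      rw [Finset.sum_Icc_succ_top (by omega), ih]
      simp only [hg]
      split_ifs with h
      · have h1 : n - N = 0 := by omega
        have h2 : n + 1 - N = 0 := by omega
        simp [h1, h2]
      · have h2 : n + 1 - N = (n - N) + 1 := by omega
        rw [h2]; push_cast; ring
  have hintg := LSeries_eq_mul_integral g zero_le_one hs
    (by
      refine LSeriesSummable_of_bounded_of_one_lt_re (m := 1) (fun n _ => ?_) hs
      simp only [hg]; split_ifs <;> simp)
    (by
      refine Asymptotics.IsBigO.of_bound 1 (Filter.Eventually.of_forall fun n => ?_)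
      rw [hcount]
      simp)
  rw [hL, hintg, add_sub_assoc]
  congr 1
  -- integral manip
  have hi1 : MeasureTheory.IntegrableOn (fun t : ℝ => (t : ℂ) ^ (-s)) (Set.Ioi (N:ℝ)) :=
    integrableOn_Ioi_cpow_of_lt (by simp; linarith) hN0
  have hi2 : MeasureTheory.IntegrableOn (fun t : ℝ => (t : ℂ) ^ (-(s+1))) (Set.Ioi (N:ℝ)) :=
    integrableOn_Ioi_cpow_of_lt (by simp; linarith) hN0
  have hi3 : MeasureTheory.IntegrableOn (fun t : ℝ => ((Int.fract t : ℝ) : ℂ) * (t : ℂ) ^ (-(s+1))) (Set.Ioi (N:ℝ)) := by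
    refine hi2.bdd_mul (c := 1) ?_ ?_
    · exact (Complex.measurable_ofReal.comp measurable_fract).aestronglyMeasurable
    · refine Filter.Eventually.of_forall fun t => ?_
      rw [Complex.norm_real, Real.norm_eq_abs, abs_of_nonneg (Int.fract_nonneg t)]
      exact (Int.fract_lt_one t).le
  have key : ∫ t in Set.Ioi (1:ℝ), (∑ k ∈ Icc 1 ⌊t⌋₊, g k) * (t : ℂ) ^ (-(s + 1))
     = ∫ t in Set.Ioi (N:ℝ), ((t : ℂ) ^ (-s) - N * (t : ℂ) ^ (-(s+1)) - ((Int.fract t : ℝ) : ℂ) * (t : ℂ) ^ (-(s+1))) := by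
    have hsub : Set.Ioi (N:ℝ) ⊆ Set.Ioi (1:ℝ) := Set.Ioi_subset_Ioi (by exact_mod_cast hN)
    rw [MeasureTheory.setIntegral_eq_of_subset_of_forall_sdiff_eq_zero (s := Set.Ioi (N:ℝ)) measurableSet_Ioi hsub]
    · refine MeasureTheory.setIntegral_congr_fun measurableSet_Ioi (fun t ht => ?_)
      have ht' : (N:ℝ) < t := ht
      have ht0 : 0 < t := hN0.trans ht'
      rw [hcount]
      have h1 : N ≤ ⌊t⌋₊ := Nat.le_floor ht'.le
      rw [Nat.cast_sub h1]
      have h2 : ((⌊t⌋₊ : ℕ) : ℂ) = (t : ℂ) - ((Int.fract t : ℝ) : ℂ) := by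
        have : ((⌊t⌋₊ : ℕ) : ℝ) = t - Int.fract t := by
          rw [natCast_floor_eq_intCast_floor ht0.le, Int.self_sub_fract]
        rw [← Complex.ofReal_natCast, this]; push_cast; rfl
      rw [h2]
      have h3 : (t : ℂ) ^ (-s) = t * (t : ℂ) ^ (-(s+1)) := by
        have : -s = 1 + (-(s+1)) := by ring
        rw [this, Complex.cpow_add _ _ (by exact_mod_cast ht0.ne'), Complex.cpow_one]
      rw [h3]; ring
    · intro t ht
      have : t ≤ N := by simpa using ht.2
      rw [hcount]
      have : ⌊t⌋₊ ≤ N := Nat.floor_le_of_le this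
      simp [Nat.sub_eq_zero_of_le this]
  have hi12 : MeasureTheory.IntegrableOn (fun t : ℝ => (t : ℂ) ^ (-s) - N * (t : ℂ) ^ (-(s+1))) (Set.Ioi (N:ℝ)) :=
    hi1.sub (hi2.const_mul _)
  rw [key, MeasureTheory.integral_sub hi12 hi3, MeasureTheory.integral_sub hi1 (hi2.const_mul _),
    MeasureTheory.integral_const_mul, integral_Ioi_cpow_of_lt (by simp; linarith) hN0,
    integral_Ioi_cpow_of_lt (by simp; linarith) hN0]
  have e1 : -s + 1 = 1 - s := by ring
  have e2 : -(s+1) + 1 = -s := by ring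
  have e3 : ((N:ℝ):ℂ) ^ (1 - s) = N * (N:ℂ) ^ (-s) := by
    rw [sub_eq_add_neg, Complex.cpow_add _ _ (by simp; omega)]; simp
  rw [e1, e2, e3]
  have e4 : (N:ℂ) ^ (1 - s) = N * (N:ℂ) ^ (-s) := by simpa using e3
  rw [e4]
  have hs1' : (1 - s) ≠ 0 := by rw [← neg_sub]; exact neg_ne_zero.mpr hs1
  push_cast
  field_simp
  ring
end MOB

open Finset ArithmeticFunction Real

namespace MOB
open Complex in
lemma fract_int_diff (N : ℕ) (hN : 1 ≤ N) {s : ℂ} (hs : 0 < s.re) :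
    DifferentiableAt ℂ (fun s : ℂ => ∫ t in Set.Ioi (N : ℝ), ((Int.fract t : ℝ) : ℂ) * (t : ℂ) ^ (-(s + 1))) s := by
  have hN0 : (0:ℝ) < N := by exact_mod_cast hN
  set f : ℝ → ℂ := Set.indicator (Set.Ioi (N:ℝ)) (fun t => ((Int.fract t : ℝ) : ℂ)) with hf
  have hfb : ∀ t, ‖f t‖ ≤ 1 := by
    intro t
    simp only [hf, Set.indicator]
    split_ifs
    · rw [Complex.norm_real, Real.norm_eq_abs, abs_of_nonneg (Int.fract_nonneg t)]
      exact (Int.fract_lt_one t).le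
    · simp
  have hmeas : Measurable f := (Complex.measurable_ofReal.comp measurable_fract).indicator measurableSet_Ioi
  have heq : (fun s : ℂ => ∫ t in Set.Ioi (N : ℝ), ((Int.fract t : ℝ) : ℂ) * (t : ℂ) ^ (-(s + 1))) = fun s => mellin f (-s) := by
    ext s
    unfold mellin
    have hsub : Set.Ioi (N:ℝ) ⊆ Set.Ioi (0:ℝ) := Set.Ioi_subset_Ioi hN0.le
    rw [MeasureTheory.setIntegral_eq_of_subset_of_forall_sdiff_eq_zero (s := Set.Ioi (N:ℝ)) (t := Set.Ioi (0:ℝ)) measurableSet_Ioi hsub]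
    · refine MeasureTheory.setIntegral_congr_fun measurableSet_Ioi (fun t ht => ?_)
      simp only [hf, Set.indicator_of_mem ht, smul_eq_mul]
      rw [mul_comm]; congr 2; ring
    · intro t ht
      simp only [hf, Set.indicator_of_notMem ht.2, smul_zero]
  rw [heq]
  have h1 : DifferentiableAt ℂ (mellin f) (-s) := by
    refine mellin_differentiableAt_of_isBigO_rpow (a := 0) (b := -s.re - 1) ?_ ?_ ?_ ?_ ?_
    · refine MeasureTheory.LocallyIntegrable.locallyIntegrableOn ?_ _
      refine MeasureTheory.LocallyIntegrable.mono (g := f) (f := fun _ => (1:ℝ)) (MeasureTheory.locallyIntegrable_const 1) hmeas.aestronglyMeasurable ?_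
      exact Filter.Eventually.of_forall (fun t => by simpa using hfb t)
    · refine Asymptotics.IsBigO.of_bound 1 (Filter.Eventually.of_forall fun t => ?_)
      simpa using hfb t
    · simpa using hs
    · refine Asymptotics.IsBigO.of_bound 1 ?_
      have : Set.Iio (N:ℝ) ∈ nhdsWithin (0:ℝ) (Set.Ioi 0) := mem_nhdsWithin_of_mem_nhds (Iio_mem_nhds hN0)
      filter_upwards [this] with t ht
      have : f t = 0 := Set.indicator_of_notMem (by simpa using (le_of_lt ht)) _
      rw [this]; simp
    · simp
  exact h1.comp s differentiableAt_id.neg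

open Complex in
lemma zeta_cut (N : ℕ) (hN : 1 ≤ N) {s : ℂ} (hs : 0 < s.re) (hi : s.im ≠ 0) :
    riemannZeta s = ∑ n ∈ Icc 1 N, (n : ℂ) ^ (-s) + (N : ℂ) ^ (1 - s) / (s - 1)
      - s * ∫ t in Set.Ioi (N : ℝ), ((Int.fract t : ℝ) : ℂ) * (t : ℂ) ^ (-(s + 1)) := by
  set R : ℂ → ℂ := fun s => ∑ n ∈ Icc 1 N, (n : ℂ) ^ (-s) + (N : ℂ) ^ (1 - s) / (s - 1)
      - s * ∫ t in Set.Ioi (N : ℝ), ((Int.fract t : ℝ) : ℂ) * (t : ℂ) ^ (-(s + 1)) with hR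
  have hne : ∀ z : ℂ, z.im ≠ 0 → z ≠ 1 := by
    rintro z hz rfl; simp at hz
  have main : ∀ U : Set ℂ, IsOpen U → Convex ℝ U → (∀ z ∈ U, 0 < z.re ∧ z.im ≠ 0) →
      (∃ z ∈ U, 1 < z.re) → Set.EqOn riemannZeta R U := by
    intro U hU hc hpos ⟨z0, hz0, hz1⟩
    have a1 : AnalyticOnNhd ℂ riemannZeta U := by
      refine DifferentiableOn.analyticOnNhd (fun z hz => ?_) hU
      exact (differentiableAt_riemannZeta (hne z (hpos z hz).2)).differentiableWithinAt
    have a2 : AnalyticOnNhd ℂ R U := by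
      refine DifferentiableOn.analyticOnNhd (fun z hz => ?_) hU
      refine DifferentiableAt.differentiableWithinAt ?_
      have hz1 : z - 1 ≠ 0 := sub_ne_zero.mpr (hne z (hpos z hz).2)
      have hN' : (N:ℂ) ≠ 0 := by simp; omega
      refine DifferentiableAt.sub (DifferentiableAt.add ?_ ?_) ?_
      · refine DifferentiableAt.fun_sum (fun n hn => ?_)
        have : (n:ℂ) ≠ 0 := by simp at hn ⊢; omega
        exact (differentiableAt_id.neg).const_cpow (Or.inl this)
      · refine DifferentiableAt.div ?_ (by fun_prop) hz1
        exact ((differentiableAt_const _).sub differentiableAt_id).const_cpow (Or.inl hN')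
      · exact differentiableAt_id.mul (fract_int_diff N hN (hpos z hz).1)
    refine a1.eqOn_of_preconnected_of_eventuallyEq a2 hc.isPreconnected hz0 ?_
    have : {z : ℂ | 1 < z.re} ∈ nhds z0 := (isOpen_lt continuous_const Complex.continuous_re).mem_nhds hz1
    filter_upwards [this] with z hz using zeta_cut_gt N hN hz
  rcases lt_or_gt_of_ne hi with h | h
  · refine main {z | 0 < z.re ∧ z.im < 0} ?_ ?_ (fun z hz => ⟨hz.1, hz.2.ne⟩) ⟨⟨2, -1⟩, by simp, by simp⟩ ⟨hs, h⟩
    · exact (isOpen_lt continuous_const Complex.continuous_re).inter (isOpen_lt Complex.continuous_im continuous_const)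
    · exact (convex_halfSpace_re_gt 0).inter (convex_halfSpace_im_lt 0)
  · refine main {z | 0 < z.re ∧ 0 < z.im} ?_ ?_ (fun z hz => ⟨hz.1, hz.2.ne'⟩) ⟨⟨2, 1⟩, by simp, by simp⟩ ⟨hs, h⟩
    · exact (isOpen_lt continuous_const Complex.continuous_re).inter (isOpen_lt continuous_const Complex.continuous_im)
    · exact (convex_halfSpace_re_gt 0).inter (convex_halfSpace_im_gt 0)

open Complex in
lemma fract_int_bound (N : ℕ) (hN : 1 ≤ N) {s : ℂ} (hs : 0 < s.re) :
    ‖∫ t in Set.Ioi (N : ℝ), ((Int.fract t : ℝ) : ℂ) * (t : ℂ) ^ (-(s + 1))‖ ≤ (N:ℝ) ^ (-s.re) / s.re := by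
  have hN0 : (0:ℝ) < N := by exact_mod_cast hN
  have h1 : ∫ t in Set.Ioi (N:ℝ), t ^ (-s.re - 1) = (N:ℝ) ^ (-s.re) / s.re := by
    rw [integral_Ioi_rpow_of_lt (by linarith) hN0]
    have : -s.re - 1 + 1 = -s.re := by ring
    rw [this, neg_div_neg_eq]
  rw [← h1]
  refine MeasureTheory.norm_integral_le_of_norm_le (integrableOn_Ioi_rpow_of_lt (by linarith) hN0) ?_
  refine (MeasureTheory.ae_restrict_iff' measurableSet_Ioi).mpr (Filter.Eventually.of_forall fun t ht => ?_)
  have ht0 : 0 < t := hN0.trans ht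
  rw [norm_mul, Complex.norm_real, Real.norm_eq_abs, abs_of_nonneg (Int.fract_nonneg t), Complex.norm_cpow_eq_rpow_re_of_pos ht0]
  have e : (-(s+1)).re = -s.re - 1 := by simp; ring
  rw [e]
  have := (Int.fract_lt_one t).le
  have h2 : 0 ≤ t ^ (-s.re - 1) := by positivity
  nlinarith

/-- upper bound: on `Re s ≥ 1 - δ`, `|ζ(s)| ≤ C |t|^(2δ)` -/
lemma zeta_upper (δ : ℝ) (hδ : 0 < δ) (hδ1 : δ ≤ 1/2) :
    ∃ C > 0, ∀ s : ℂ, 1 - δ ≤ s.re → s.re ≤ 4 → 1 ≤ |s.im| →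
      ‖riemannZeta s‖ ≤ C * |s.im| ^ (2*δ) := by
  refine ⟨4/δ + 30, by positivity, ?_⟩
  intro s h1 h4 ht
  set τ := |s.im| with hτ
  set N := ⌈τ⌉₊ with hNdef
  have hN1 : 1 ≤ N := Nat.one_le_ceil_iff.mpr (by linarith)
  have hτN : τ ≤ N := Nat.le_ceil τ
  have hN2 : (N:ℝ) ≤ 2 * τ := by
    have := Nat.ceil_lt_add_one (a := τ) (by linarith)
    rw [← hNdef] at this; linarith
  have hN0 : (0:ℝ) < N := by linarith
  have hs0 : 0 < s.re := by linarith
  have hi : s.im ≠ 0 := by intro h; rw [h] at hτ; simp at hτ; linarith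
  rw [zeta_cut N hN1 hs0 hi]
  have hτδ : 1 ≤ τ ^ (2*δ) := Real.one_le_rpow ht (by positivity)
  have hNδ : (N:ℝ) ^ δ ≤ 2 * τ ^ δ := by
    calc (N:ℝ) ^ δ ≤ (2 * τ) ^ δ := Real.rpow_le_rpow hN0.le hN2 hδ.le
      _ = 2 ^ δ * τ ^ δ := Real.mul_rpow (by norm_num) (by linarith)
      _ ≤ 2 * τ ^ δ := by
        gcongr
        calc (2:ℝ) ^ δ ≤ 2 ^ (1:ℝ) := Real.rpow_le_rpow_of_exponent_le (by norm_num) (by linarith)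
          _ = 2 := by norm_num
  have hτ12 : τ ^ δ ≤ τ ^ (2*δ) := Real.rpow_le_rpow_of_exponent_le ht (by linarith)
  have hsq : τ ^ δ * τ ^ δ = τ ^ (2*δ) := by rw [← Real.rpow_add (by linarith)]; ring_nf
  -- main sum
  have hA : ‖∑ n ∈ Icc 1 N, (n : ℂ) ^ (-s)‖ ≤ (2 + 4/δ) * τ ^ (2*δ) := by
    have b1 : ∀ n ∈ Icc 1 N, ‖(n : ℂ) ^ (-s)‖ ≤ (N:ℝ) ^ δ * (n:ℝ)⁻¹ := by
      intro n hn
      have hn1 : 1 ≤ n := (Finset.mem_Icc.mp hn).1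
      have hn2 : (n:ℝ) ≤ N := by exact_mod_cast (Finset.mem_Icc.mp hn).2
      have hn0 : (1:ℝ) ≤ n := by exact_mod_cast hn1
      rw [← Complex.ofReal_natCast, Complex.norm_cpow_eq_rpow_re_of_pos (by linarith)]
      calc (n:ℝ) ^ (-s).re ≤ (n:ℝ) ^ (δ + (-1)) := Real.rpow_le_rpow_of_exponent_le hn0 (by simp; linarith)
        _ = (n:ℝ) ^ δ * (n:ℝ)⁻¹ := by rw [Real.rpow_add (by linarith), Real.rpow_neg_one]
        _ ≤ _ := by gcongr
    have b2 : ∑ n ∈ Icc 1 N, (n:ℝ)⁻¹ ≤ 1 + Real.log N := by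
      have := harmonic_le_one_add_log N
      rw [harmonic_eq_sum_Icc] at this
      push_cast at this
      exact this
    have b3 : Real.log N ≤ (N:ℝ) ^ δ / δ := Real.log_le_rpow_div hN0.le hδ
    have b4 : 0 ≤ (N:ℝ) ^ δ := by positivity
    calc ‖∑ n ∈ Icc 1 N, (n : ℂ) ^ (-s)‖ ≤ ∑ n ∈ Icc 1 N, (N:ℝ) ^ δ * (n:ℝ)⁻¹ :=
          (norm_sum_le _ _).trans (Finset.sum_le_sum b1)
      _ = (N:ℝ) ^ δ * ∑ n ∈ Icc 1 N, (n:ℝ)⁻¹ := by rw [Finset.mul_sum]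
      _ ≤ (N:ℝ) ^ δ * (1 + (N:ℝ) ^ δ / δ) := by gcongr; linarith
      _ = (N:ℝ) ^ δ + ((N:ℝ) ^ δ * (N:ℝ) ^ δ) / δ := by ring
      _ ≤ 2 * τ ^ δ + ((2 * τ ^ δ) * (2 * τ ^ δ)) / δ := by gcongr
      _ = 2 * τ ^ δ + 4 / δ * (τ ^ δ * τ ^ δ) := by ring
      _ ≤ (2 + 4/δ) * τ ^ (2*δ) := by rw [hsq]; linarith
  have hB : ‖(N : ℂ) ^ (1 - s) / (s - 1)‖ ≤ 2 * τ ^ (2*δ) := by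
    rw [norm_div]
    have h5 : ‖(N : ℂ) ^ (1 - s)‖ ≤ 2 * τ ^ (2*δ) := by
      rw [← Complex.ofReal_natCast, Complex.norm_cpow_eq_rpow_re_of_pos hN0]
      calc (N:ℝ) ^ (1-s).re ≤ (N:ℝ) ^ δ := Real.rpow_le_rpow_of_exponent_le (by linarith) (by simp; linarith)
        _ ≤ _ := by linarith
    have h6 : 1 ≤ ‖s - 1‖ := by
      have := Complex.abs_im_le_norm (s - 1)
      simp at this; linarith
    calc _ ≤ 2 * τ ^ (2*δ) / 1 := by gcongr
      _ = _ := by ring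
  have hC : ‖s * ∫ t in Set.Ioi (N : ℝ), ((Int.fract t : ℝ) : ℂ) * (t : ℂ) ^ (-(s + 1))‖ ≤ 20 * τ ^ (2*δ) := by
    rw [norm_mul]
    have h7 := fract_int_bound N hN1 hs0
    have h8 : ‖s‖ ≤ 5 * τ := by
      have := Complex.norm_le_abs_re_add_abs_im s
      rw [abs_of_pos hs0] at this; linarith
    have h9 : (N:ℝ) ^ (-s.re) / s.re ≤ 2 * (N:ℝ) ^ (-(1-δ)) := by
      have : (N:ℝ) ^ (-s.re) ≤ (N:ℝ) ^ (-(1-δ)) := Real.rpow_le_rpow_of_exponent_le (by linarith) (by linarith)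
      rw [div_le_iff₀ hs0]
      have h10 : 0 ≤ (N:ℝ) ^ (-(1-δ)) := by positivity
      nlinarith
    have h11 : τ * (N:ℝ) ^ (-(1-δ)) ≤ 2 * τ ^ (2*δ) := by
      calc τ * (N:ℝ) ^ (-(1-δ)) ≤ N * (N:ℝ) ^ (-(1-δ)) := by gcongr
        _ = (N:ℝ) ^ δ := by
          nth_rewrite 1 [← Real.rpow_one (N:ℝ)]
          rw [← Real.rpow_add hN0]; ring_nf
        _ ≤ _ := by linarith
    calc ‖s‖ * _ ≤ (5 * τ) * (2 * (N:ℝ) ^ (-(1-δ))) := by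
          apply mul_le_mul h8 (h7.trans h9) (norm_nonneg _) (by linarith)
      _ = 10 * (τ * (N:ℝ) ^ (-(1-δ))) := by ring
      _ ≤ 20 * τ ^ (2*δ) := by linarith
  calc _ ≤ ‖∑ n ∈ Icc 1 N, (n : ℂ) ^ (-s)‖ + ‖(N : ℂ) ^ (1 - s) / (s - 1)‖ + ‖s * ∫ t in Set.Ioi (N : ℝ), ((Int.fract t : ℝ) : ℂ) * (t : ℂ) ^ (-(s + 1))‖ :=
        (norm_sub_le _ _).trans (by gcongr; exact norm_add_le _ _)
    _ ≤ (4/δ + 30) * τ ^ (2*δ) := by linarith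
end MOB

open Finset ArithmeticFunction Real

namespace MOB

lemma zeta_341 {η : ℝ} (hη : 0 < η) (y : ℝ) :
    1 ≤ ‖riemannZeta (1 + η)‖ ^ 3 * ‖riemannZeta (1 + η + Complex.I * y)‖ ^ 4 *
      ‖riemannZeta (1 + η + 2 * Complex.I * y)‖ := by
  have := DirichletCharacter.norm_LFunction_product_ge_one (1 : DirichletCharacter ℂ 1) hη y
  simpa [DirichletCharacter.LFunctionTrivChar, DirichletCharacter.LFunction_modOne_eq, norm_mul, norm_pow] using this

lemma zeta_real_upper {η : ℝ} (hη : 0 < η) (h3 : η ≤ 3) :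
    ‖riemannZeta (1 + η)‖ ≤ 7 / η := by
  have hre : (1 + (η:ℂ)).re = 1 + η := by simp
  rw [zeta_cut_gt 1 le_rfl (by rw [hre]; linarith)]
  have h1 := fract_int_bound 1 le_rfl (s := 1 + (η:ℂ)) (by rw [hre]; linarith)
  rw [hre] at h1
  simp only [Nat.cast_one, Real.one_rpow] at h1
  have h2 : ‖(1 + (η:ℂ))‖ = 1 + η := by
    have : (1 + (η:ℂ)) = ((1 + η : ℝ) : ℂ) := by push_cast; rfl
    rw [this, Complex.norm_real, Real.norm_eq_abs, abs_of_pos (by linarith)]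
  have h3' : ‖(1 + (η:ℂ)) * ∫ t in Set.Ioi ((1:ℕ) : ℝ), ((Int.fract t : ℝ) : ℂ) * (t : ℂ) ^ (-((1 + (η:ℂ)) + 1))‖ ≤ 1 := by
    rw [norm_mul, h2]
    simp only [Nat.cast_one]
    calc _ ≤ (1 + η) * (1 / (1+η)) := by gcongr
      _ = 1 := by field_simp
  have h4 : ‖((1:ℕ):ℂ) ^ (1 - (1 + (η:ℂ))) / (1 + (η:ℂ) - 1)‖ = 1 / η := by
    simp [abs_of_pos hη]
  have h5 : ‖∑ n ∈ Icc (1:ℕ) 1, (n : ℂ) ^ (-(1 + (η:ℂ)))‖ = 1 := by simp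
  calc _ ≤ ‖∑ n ∈ Icc (1:ℕ) 1, (n : ℂ) ^ (-(1 + (η:ℂ)))‖ + ‖((1:ℕ):ℂ) ^ (1 - (1 + (η:ℂ))) / (1 + (η:ℂ) - 1)‖ + ‖(1 + (η:ℂ)) * ∫ t in Set.Ioi ((1:ℕ) : ℝ), ((Int.fract t : ℝ) : ℂ) * (t : ℂ) ^ (-((1 + (η:ℂ)) + 1))‖ :=
        (norm_sub_le _ _).trans (by gcongr; exact norm_add_le _ _)
    _ ≤ 1 + 1/η + 1 := by rw [h4, h5]; exact add_le_add le_rfl h3'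
    _ ≤ 7 / η := by
      have : 7 / η = 1/η + 6/η := by ring
      have h6 : 2 ≤ 6/η := by rw [le_div_iff₀ hη]; linarith
      linarith

lemma zeta_deriv (δ : ℝ) (hδ : 0 < δ) (hδ1 : δ ≤ 1/2) :
    ∃ C > 0, ∀ s : ℂ, 1 - δ/2 ≤ s.re → s.re ≤ 3 → 2 ≤ |s.im| →
      ‖deriv riemannZeta s‖ ≤ C * |s.im| ^ (2*δ) := by
  obtain ⟨C, hC, h⟩ := zeta_upper δ hδ hδ1
  refine ⟨2 * C / (δ/2), by positivity, ?_⟩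
  intro s h1 h2 h3
  have key : ∀ z ∈ Metric.closedBall s (δ/2), 1 - δ ≤ z.re ∧ z.re ≤ 4 ∧ 1 ≤ |z.im| ∧ |z.im| ≤ 2 * |s.im| := by
    intro z hz
    rw [mem_closedBall_iff_norm] at hz
    have a1 := (Complex.abs_re_le_norm (z - s)).trans hz
    have a2 := (Complex.abs_im_le_norm (z - s)).trans hz
    simp only [Complex.sub_re, Complex.sub_im] at a1 a2
    have a3 := abs_le.mp a1
    have a4 : |s.im| - |z.im| ≤ δ/2 := by
      have := abs_sub_abs_le_abs_sub s.im z.im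
      rw [abs_sub_comm] at this; linarith
    have a5 : |z.im| - |s.im| ≤ δ/2 := (abs_sub_abs_le_abs_sub _ _).trans a2
    exact ⟨by linarith, by linarith, by linarith, by linarith⟩
  have hd : DiffContOnCl ℂ riemannZeta (Metric.ball s (δ/2)) := by
    refine DifferentiableOn.diffContOnCl_ball (U := {z | z ≠ 1}) ?_ ?_
    · intro z hz
      exact (differentiableAt_riemannZeta hz).differentiableWithinAt
    · rintro z hz rfl
      have := (key _ hz).2.2.1
      simp at this; linarith
  have := Complex.norm_deriv_le_of_forall_mem_sphere_norm_le (C := 2 * C * |s.im| ^ (2*δ)) (by positivity : 0 < δ/2) hd (by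
    intro z hz
    have hk := key z (Metric.sphere_subset_closedBall hz)
    calc ‖riemannZeta z‖ ≤ C * |z.im| ^ (2*δ) := h z hk.1 hk.2.1 hk.2.2.1
      _ ≤ C * (2 * |s.im|) ^ (2*δ) := by
        gcongr; exact hk.2.2.2
      _ = C * (2 ^ (2*δ) * |s.im| ^ (2*δ)) := by rw [Real.mul_rpow (by norm_num) (abs_nonneg _)]
      _ ≤ C * (2 * |s.im| ^ (2*δ)) := by
        gcongr
        calc (2:ℝ) ^ (2*δ) ≤ 2 ^ (1:ℝ) := Real.rpow_le_rpow_of_exponent_le (by norm_num) (by linarith)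
          _ = 2 := by norm_num
      _ = _ := by ring)
  calc _ ≤ _ := this
    _ = _ := by ring

lemma zeta_lower (b : ℝ) (hb : 0 < b) (hb1 : b ≤ 1) :
    ∃ c > 0, c ≤ 1 ∧ ∀ s : ℂ, 2 ≤ |s.im| → 1 - c * |s.im| ^ (-(5*b)) ≤ s.re → s.re ≤ 3 →
      c * |s.im| ^ (-(4*b)) ≤ ‖riemannZeta s‖ := by
  obtain ⟨C1, hC1, hup⟩ := zeta_upper (b/2) (by positivity) (by linarith)
  obtain ⟨C2, hC2, hder⟩ := zeta_deriv (b/2) (by positivity) (by linarith)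
  have eb : 2 * (b/2) = b := by ring
  rw [eb] at hup hder
  set c1 : ℝ := 1 / (343 * (2 * C1)) with hc1
  have hc1p : 0 < c1 := by positivity
  set e : ℝ := c1 ^ (1/4 : ℝ) with he
  have hep : 0 < e := by positivity
  have he4 : e ^ 4 = c1 := by
    rw [he, ← Real.rpow_natCast, ← Real.rpow_mul hc1p.le]; norm_num
  -- claim 1
  have claim1 : ∀ s : ℂ, 2 ≤ |s.im| → 1 < s.re → s.re ≤ 3 → c1 * (s.re - 1)^3 * |s.im| ^ (-b) ≤ ‖riemannZeta s‖ ^ 4 := by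
    intro s hs h1 h3
    have hη : 0 < s.re - 1 := by linarith
    have h341 := zeta_341 hη s.im
    have e1 : (1 + ((s.re - 1 : ℝ) : ℂ) + Complex.I * s.im) = s := by
      apply Complex.ext <;> simp
    rw [e1] at h341
    have hr := zeta_real_upper hη (by linarith)
    set w : ℂ := 1 + ((s.re - 1 : ℝ) : ℂ) + 2 * Complex.I * s.im with hw
    have wre : w.re = s.re := by simp [hw]
    have wim : w.im = 2 * s.im := by simp [hw]
    have hτ : 0 < |s.im| := by linarith
    have hw2 : ‖riemannZeta w‖ ≤ 2 * C1 * |s.im| ^ b := by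
      calc ‖riemannZeta w‖ ≤ C1 * |w.im| ^ b := hup w (by rw [wre]; linarith) (by rw [wre]; linarith) (by rw [wim, abs_mul]; norm_num; linarith)
        _ = C1 * (2 ^ b * |s.im| ^ b) := by rw [wim, abs_mul, Real.mul_rpow (by norm_num) (abs_nonneg _)]; norm_num
        _ ≤ C1 * (2 * |s.im| ^ b) := by
          gcongr
          calc (2:ℝ) ^ b ≤ 2 ^ (1:ℝ) := Real.rpow_le_rpow_of_exponent_le (by norm_num) hb1
            _ = 2 := by norm_num
        _ = _ := by ring
    have hτb : |s.im| ^ (-b) * |s.im| ^ b = 1 := by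
      rw [← Real.rpow_add hτ]; simp
    have h5 : 1 ≤ (7 / (s.re - 1))^3 * ‖riemannZeta s‖^4 * (2 * C1 * |s.im| ^ b) := by
      refine h341.trans ?_
      gcongr
    have h6 : (7 / (s.re - 1))^3 * (s.re - 1)^3 = 343 := by
      field_simp; norm_num
    have hp : 0 < c1 * (s.re - 1)^3 * |s.im| ^ (-b) := by positivity
    calc c1 * (s.re - 1)^3 * |s.im| ^ (-b) = (c1 * (s.re - 1)^3 * |s.im| ^ (-b)) * 1 := by ring
      _ ≤ (c1 * (s.re - 1)^3 * |s.im| ^ (-b)) * ((7 / (s.re - 1))^3 * ‖riemannZeta s‖^4 * (2 * C1 * |s.im| ^ b)) := by gcongr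
      _ = c1 * (2 * C1) * ((7 / (s.re - 1))^3 * (s.re - 1)^3) * (|s.im| ^ (-b) * |s.im| ^ b) * ‖riemannZeta s‖^4 := by ring
      _ = ‖riemannZeta s‖ ^ 4 := by
        rw [h6, hτb, hc1]; field_simp
  set k : ℝ := min (min 1 (e / (4 * C2))) (b/4) with hk
  have hkp : 0 < k := by positivity
  have hk1 : k ≤ 1 := (min_le_left _ _).trans (min_le_left _ _)
  have hk2 : k ≤ e / (4 * C2) := (min_le_left _ _).trans (min_le_right _ _)
  have hk3 : k ≤ b / 4 := min_le_right _ _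
  have hk4 : k ^ 4 ≤ k := by
    calc k ^ 4 = k * k^3 := by ring
      _ ≤ k * 1 := by gcongr; exact pow_le_one₀ hkp.le hk1
      _ = k := by ring
  refine ⟨min (k^4) (e * k^3 / 2), by positivity, (min_le_left _ _).trans (hk4.trans hk1), ?_⟩
  intro s hs h1 h3
  set τ := |s.im| with hτ
  have hτ0 : 0 < τ := by linarith
  set η := k^4 * τ ^ (-(5*b)) with hη
  have hηp : 0 < η := by positivity
  have hτle : τ ^ (-(5*b)) ≤ 1 := Real.rpow_le_one_of_one_le_of_nonpos (by linarith) (by linarith)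
  have hηk : η ≤ k := by
    calc η ≤ k^4 * 1 := by rw [hη]; gcongr
      _ ≤ k := by linarith
  have hre : 1 - η ≤ s.re := by
    refine le_trans ?_ h1
    have : min (k^4) (e * k^3 / 2) * τ ^ (-(5*b)) ≤ η := by
      rw [hη]; gcongr; exact min_le_left _ _
    linarith
  -- claim 2
  have claim2 : ∀ z : ℂ, |z.im| = τ → 1 + η ≤ z.re → z.re ≤ 3 → e * k^3 * τ ^ (-(4*b)) ≤ ‖riemannZeta z‖ := by
    intro z hz hz1 hz3
    have := claim1 z (by rw [hz]; exact hs) (by linarith) hz3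
    rw [hz] at this
    refine le_of_pow_le_pow_left₀ (n := 4) (by norm_num) (norm_nonneg _) ?_
    refine le_trans ?_ this
    have e1 : (τ ^ (-(4*b)))^4 = (τ ^ (-(5*b)))^3 * τ ^ (-b) := by
      rw [← Real.rpow_natCast, ← Real.rpow_natCast, ← Real.rpow_mul hτ0.le, ← Real.rpow_mul hτ0.le, ← Real.rpow_add hτ0]
      congr 1; push_cast; ring
    calc (e * k^3 * τ ^ (-(4*b)))^4 = e^4 * (k^4)^3 * (τ ^ (-(4*b)))^4 := by ring
      _ = c1 * η^3 * τ ^ (-b) := by rw [he4, e1, hη]; ring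
      _ ≤ _ := by gcongr; linarith
  have hfin : e * k^3 / 2 * τ ^ (-(4*b)) ≤ ‖riemannZeta s‖ := by
    rcases le_total (1 + η) s.re with h | h
    · refine le_trans ?_ (claim2 s hτ.symm h h3)
      gcongr
      have : 0 < e * k^3 := by positivity
      linarith
    · set z : ℂ := ⟨1 + η, s.im⟩ with hz
      have hc := claim2 z (by simp [hz, hτ]) (by simp [hz]) (by simp [hz]; linarith)
      set U : Set ℂ := {w | 1 - b/4 ≤ w.re ∧ w.re ≤ 3 ∧ w.im = s.im} with hU
      have hconv : Convex ℝ U := by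
        have : U = ({w | 1 - b/4 ≤ w.re} ∩ {w | w.re ≤ 3}) ∩ {w | w.im = s.im} := by
          ext w; simp [hU, and_assoc]
        rw [this]
        refine ((convex_halfSpace_re_ge _).inter (convex_halfSpace_re_le _)).inter ?_
        intro x hx y hy a b' ha hb' hab
        simp only [Set.mem_setOf_eq] at hx hy ⊢
        simp [hx, hy, ← add_mul, hab]
      have hmv := hconv.norm_image_sub_le_of_norm_deriv_le (f := riemannZeta) (C := C2 * τ ^ b) (x := z) (y := s)
        (by
          intro w hw
          refine differentiableAt_riemannZeta ?_
          rintro rfl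
          have := hw.2.2
          simp at this
          rw [hτ, ← this] at hs; simp at hs; linarith)
        (by
          intro w hw
          have := hder w (by linarith [hw.1]) hw.2.1 (by rw [hw.2.2]; exact hs)
          rwa [hw.2.2] at this)
        (by simp [hU, hz]; constructor <;> linarith)
        (by simp [hU]; constructor <;> linarith)
      have hd : ‖s - z‖ ≤ 2 * η := by
        have : s - z = ((s.re - (1 + η) : ℝ) : ℂ) := by apply Complex.ext <;> simp [hz]
        rw [this, Complex.norm_real, Real.norm_eq_abs, abs_le]
        constructor <;> linarith
      have e2 : τ ^ b * τ ^ (-(5*b)) = τ ^ (-(4*b)) := by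
        rw [← Real.rpow_add hτ0]; ring_nf
      have h8 : C2 * τ ^ b * ‖s - z‖ ≤ e * k^3 / 2 * τ ^ (-(4*b)) := by
        calc C2 * τ ^ b * ‖s - z‖ ≤ C2 * τ ^ b * (2 * η) := by gcongr
          _ = 2 * C2 * k * k^3 * (τ ^ b * τ ^ (-(5*b))) := by rw [hη]; ring
          _ ≤ 2 * C2 * (e / (4 * C2)) * k^3 * (τ ^ b * τ ^ (-(5*b))) := by gcongr
          _ = e * k^3 / 2 * τ ^ (-(4*b)) := by rw [e2]; field_simp; norm_num
      have h9 : ‖riemannZeta z‖ ≤ ‖riemannZeta s‖ + ‖riemannZeta s - riemannZeta z‖ := by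
        have := norm_sub_norm_le (riemannZeta z) (riemannZeta s)
        rw [norm_sub_rev] at this; linarith
      linarith
  refine le_trans ?_ hfin
  gcongr
  exact min_le_right _ _
end MOB

open Finset ArithmeticFunction Real

namespace MOB

lemma zinv_high (j : ℕ) : ∃ C > 0, ∀ s : ℂ, 1 ≤ s.re → s.re ≤ 2 → 3 ≤ |s.im| →
    ‖iteratedDeriv j (fun s => (riemannZeta s)⁻¹) s‖ ≤ C * |s.im| ^ (1/2 : ℝ) := by
  set b : ℝ := 1 / (2 * (5 * j + 4)) with hbdef
  have hj : (0:ℝ) ≤ j := Nat.cast_nonneg j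
  have hb : 0 < b := by positivity
  have hb1 : b ≤ 1 := by
    rw [hbdef, div_le_one (by positivity)]; linarith
  obtain ⟨c, hc, hc1, H⟩ := zeta_lower b hb hb1
  refine ⟨j.factorial * (16 / c) * (32/c)^j, by positivity, ?_⟩
  intro s h1 h2 h3
  set τ := |s.im| with hτ
  have hτ0 : 0 < τ := by linarith
  set r := c * τ ^ (-(5*b)) / 32 with hr
  have hr0 : 0 < r := by positivity
  have hτle : τ ^ (-(5*b)) ≤ 1 := by
    apply Real.rpow_le_one_of_one_le_of_nonpos <;> linarith
  have hr1 : r ≤ 1/32 := by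
    rw [hr]
    have : c * τ ^ (-(5*b)) ≤ 1 * 1 := by gcongr
    linarith
  have key : ∀ z ∈ Metric.closedBall s r, 2 ≤ |z.im| ∧ c * τ ^ (-(4*b)) / 16 ≤ ‖riemannZeta z‖ := by
    intro z hz
    rw [Metric.mem_closedBall, dist_eq_norm] at hz
    have him : |z.im - s.im| ≤ r := by
      rw [← Complex.sub_im]; exact (Complex.abs_im_le_norm _).trans hz
    have hre : |z.re - s.re| ≤ r := by
      rw [← Complex.sub_re]; exact (Complex.abs_re_le_norm _).trans hz
    have ha : |s.im| - |z.im| ≤ r := (abs_sub_abs_le_abs_sub _ _).trans (by rw [abs_sub_comm]; exact him)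
    have hb' : |z.im| - |s.im| ≤ r := (abs_sub_abs_le_abs_sub _ _).trans him
    rw [← hτ] at ha hb'
    have hz2 : 2 ≤ |z.im| := by linarith
    have hz3 : |z.im| ≤ 2 * τ := by linarith
    obtain ⟨hre1, hre2⟩ := abs_le.mp hre
    have p5 : τ ^ (-(5*b)) / 32 ≤ |z.im| ^ (-(5*b)) := by
      calc τ ^ (-(5*b)) / 32 ≤ (2 * τ) ^ (-(5*b)) := by
            rw [Real.mul_rpow (by norm_num) hτ0.le]
            have : (2:ℝ) ^ (-5:ℝ) ≤ 2 ^ (-(5*b)) := by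
              apply Real.rpow_le_rpow_of_exponent_le <;> linarith
            have h25 : (2:ℝ) ^ (-5:ℝ) = 1/32 := by
              rw [Real.rpow_neg (by norm_num)]; norm_num
            rw [h25] at this
            have := mul_le_mul_of_nonneg_right this (Real.rpow_nonneg hτ0.le (-(5*b)))
            linarith
        _ ≤ _ := by
            apply Real.rpow_le_rpow_of_nonpos <;> linarith
    have p4 : τ ^ (-(4*b)) / 16 ≤ |z.im| ^ (-(4*b)) := by
      calc τ ^ (-(4*b)) / 16 ≤ (2 * τ) ^ (-(4*b)) := by
            rw [Real.mul_rpow (by norm_num) hτ0.le]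
            have : (2:ℝ) ^ (-4:ℝ) ≤ 2 ^ (-(4*b)) := by
              apply Real.rpow_le_rpow_of_exponent_le <;> linarith
            have h25 : (2:ℝ) ^ (-4:ℝ) = 1/16 := by
              rw [Real.rpow_neg (by norm_num)]; norm_num
            rw [h25] at this
            have := mul_le_mul_of_nonneg_right this (Real.rpow_nonneg hτ0.le (-(4*b)))
            linarith
        _ ≤ _ := by
            apply Real.rpow_le_rpow_of_nonpos <;> linarith
    refine ⟨hz2, ?_⟩
    have := H z hz2 (by
      have : r ≤ c * |z.im| ^ (-(5*b)) := by
        rw [hr, mul_div_assoc]; gcongr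
      linarith) (by linarith)
    refine le_trans ?_ this
    rw [mul_div_assoc]; gcongr
  have hpos : 0 < c * τ ^ (-(4*b)) / 16 := by positivity
  have hd : DifferentiableOn ℂ (fun s => (riemannZeta s)⁻¹) (Metric.closedBall s r) := by
    intro z hz
    obtain ⟨k1, k2⟩ := key z hz
    have hz1 : z ≠ 1 := by rintro rfl; simp at k1; linarith
    have hz0 : riemannZeta z ≠ 0 := by
      intro h0; rw [h0, norm_zero] at k2; linarith
    exact ((differentiableAt_riemannZeta hz1).inv hz0).differentiableWithinAt
  have hb2 := Complex.norm_iteratedDeriv_le_of_forall_mem_sphere_norm_le (C := (16/c) * τ ^ (4*b)) j hr0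
    (hd.diffContOnCl_ball subset_rfl) (by
      intro z hz
      obtain ⟨k1, k2⟩ := key z (Metric.sphere_subset_closedBall hz)
      rw [norm_inv]
      calc _ ≤ (c * τ ^ (-(4*b)) / 16)⁻¹ := by gcongr
        _ = (16/c) * τ ^ (4*b) := by
          rw [Real.rpow_neg hτ0.le]; field_simp)
  refine hb2.trans (le_of_eq ?_)
  have e1 : r ^ j = (c/32)^j * (τ ^ (5*b*j))⁻¹ := by
    rw [hr, Real.rpow_neg hτ0.le, Real.rpow_mul_natCast hτ0.le]
    rw [← inv_pow, ← mul_pow]; congr 1; ring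
  have e2 : τ ^ (1/2:ℝ) = τ ^ (4*b) * τ ^ (5*b*j) := by
    rw [← Real.rpow_add hτ0]; congr 1
    rw [hbdef]; field_simp; ring
  rw [e1, e2, div_pow, div_pow]
  field_simp

lemma zinv_low (j : ℕ) : ∃ C, ∀ s : ℂ, 1 < s.re → s.re ≤ 2 → |s.im| ≤ 3 →
    ‖iteratedDeriv j (fun s => (riemannZeta s)⁻¹) s‖ ≤ C := by
  set H := DirichletCharacter.LFunctionTrivChar₁ 1 with hH
  have hHd : Differentiable ℂ H := DirichletCharacter.differentiable_LFunctionTrivChar₁ 1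
  have hH1 : ∀ s, s ≠ 1 → H s = (s - 1) * riemannZeta s := by
    intro s hs
    rw [hH, DirichletCharacter.LFunctionTrivChar₁, Function.update_of_ne hs,
      DirichletCharacter.LFunctionTrivChar, DirichletCharacter.LFunction_modOne_eq]
  set U : Set ℂ := {s | H s ≠ 0} with hU
  have hUo : IsOpen U := isOpen_ne_fun hHd.continuous continuous_const
  have hK : Set.Icc (1:ℝ) 2 ×ℂ Set.Icc (-3:ℝ) 3 ⊆ U := by
    intro s hs
    rw [Complex.mem_reProdIm] at hs
    by_cases h1 : s = 1
    · rw [h1]; exact DirichletCharacter.LFunctionTrivChar₁_apply_one_ne_zero 1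
    · have := hH1 s h1
      change H s ≠ 0
      rw [this]
      exact mul_ne_zero (sub_ne_zero.mpr h1) (riemannZeta_ne_zero_of_one_le_re hs.1.1)
  have hG : DifferentiableOn ℂ (fun s => (s - 1) * (H s)⁻¹) U := by
    intro s hs
    have : DifferentiableAt ℂ (fun s => (s - 1) * (H s)⁻¹) s :=
      (differentiableAt_id.sub_const 1).mul ((hHd s).inv hs)
    exact this.differentiableWithinAt
  have hGa := hG.analyticOnNhd hUo
  have hc : ContinuousOn (iteratedDeriv j (fun s => (s - 1) * (H s)⁻¹)) U := by
    rw [iteratedDeriv_eq_iterate]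
    exact (hGa.iterated_deriv j).continuousOn
  obtain ⟨C, hC⟩ := ((isCompact_Icc).reProdIm isCompact_Icc).exists_bound_of_continuousOn (hc.mono hK)
  refine ⟨C, fun s h1 h2 h3 => ?_⟩
  have he : (fun s => (riemannZeta s)⁻¹) =ᶠ[nhds s] (fun s => (s - 1) * (H s)⁻¹) := by
    have : ∀ᶠ z in nhds s, z ≠ 1 := isOpen_ne.mem_nhds (by rintro rfl; simp at h1)
    filter_upwards [this] with z hz
    rw [hH1 z hz]
    have := sub_ne_zero.mpr hz
    rw [mul_inv, ← mul_assoc, mul_inv_cancel₀ this, one_mul]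
  rw [he.iteratedDeriv_eq j]
  exact hC s (by rw [Complex.mem_reProdIm]; exact ⟨⟨h1.le, h2⟩, abs_le.mp h3⟩)

lemma zinv_bound (j : ℕ) : ∃ C > 0, ∀ s : ℂ, 1 < s.re → s.re ≤ 2 →
    ‖iteratedDeriv j (fun s => (riemannZeta s)⁻¹) s‖ ≤ C * (1 + |s.im|) ^ (1/2 : ℝ) := by
  obtain ⟨C1, hC1, H1⟩ := zinv_high j
  obtain ⟨C2, H2⟩ := zinv_low j
  refine ⟨C1 + |C2|, by positivity, fun s h1 h2 => ?_⟩
  have hp : 1 ≤ (1 + |s.im|) ^ (1/2 : ℝ) := Real.one_le_rpow (by linarith [abs_nonneg s.im]) (by norm_num)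
  rcases le_total |s.im| 3 with h | h
  · have := H2 s h1 h2 h
    calc _ ≤ |C2| * 1 := by rw [mul_one]; exact this.trans (le_abs_self _)
      _ ≤ (C1 + |C2|) * (1 + |s.im|) ^ (1/2 : ℝ) := by gcongr; linarith
  · calc _ ≤ C1 * |s.im| ^ (1/2 : ℝ) := H1 s h1.le h2 h
      _ ≤ _ := by
        gcongr
        · linarith [abs_nonneg C2]
        · linarith

end MOB

open Finset ArithmeticFunction Real

namespace MOB

open MeasureTheory

noncomputable def kern (s : ℂ) : ℂ := 1 / s - 1 / (s + 1)

noncomputable def tent (t : ℝ) : ℂ :=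
  (Set.Ioc (0:ℝ) 1).indicator (fun _ => (1:ℂ)) t - (Set.Ioc (0:ℝ) 1).indicator (fun t => (t:ℂ) ^ (1:ℂ)) t

lemma tent_eq {t : ℝ} (ht : 0 < t) : tent t = ((max (1 - t) 0 : ℝ) : ℂ) := by
  unfold tent
  by_cases h : t ≤ 1
  · rw [Set.indicator_of_mem (by exact ⟨ht, h⟩), Set.indicator_of_mem (by exact ⟨ht, h⟩),
      max_eq_left (by linarith)]
    simp
  · rw [Set.indicator_of_notMem (by simp [h]), Set.indicator_of_notMem (by simp [h]),
      max_eq_right (by linarith)]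
    simp

lemma tent_mellin {s : ℂ} (hs : 0 < s.re) : HasMellin tent s (kern s) := by
  have h1 := hasMellin_one_Ioc hs
  have h2 := hasMellin_cpow_Ioc 1 (s := s) (by simp; linarith)
  have := hasMellin_sub h1.1 h2.1
  rw [h1.2, h2.2] at this
  exact this

lemma kern_norm {σ : ℝ} (hσ : 1 ≤ σ) (y : ℝ) : ‖kern (σ + y * Complex.I)‖ ≤ (1 + y^2)⁻¹ := by
  set s : ℂ := σ + y * Complex.I with hs
  have hre : s.re = σ := by simp [hs]
  have him : s.im = y := by simp [hs]
  have hs0 : s ≠ 0 := by intro h; rw [h] at hre; simp at hre; linarith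
  have hs1 : s + 1 ≠ 0 := by
    intro h
    have : (s+1).re = 0 := by rw [h]; rfl
    simp [hre] at this; linarith
  have e : kern s = (s * (s+1))⁻¹ := by unfold kern; field_simp; ring
  rw [e, norm_inv]
  gcongr
  rw [norm_mul]
  have a1 : Real.sqrt (1 + y^2) ≤ ‖s‖ := by
    apply Real.sqrt_le_iff.mpr ⟨norm_nonneg _, ?_⟩
    rw [← Complex.normSq_eq_norm_sq, Complex.normSq_apply, hre, him]; nlinarith
  have a2 : Real.sqrt (1 + y^2) ≤ ‖s + 1‖ := by
    apply Real.sqrt_le_iff.mpr ⟨norm_nonneg _, ?_⟩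
    rw [← Complex.normSq_eq_norm_sq, Complex.normSq_apply]
    simp only [Complex.add_re, Complex.add_im, hre, him, Complex.one_re, Complex.one_im]; nlinarith
  calc 1 + y^2 = Real.sqrt (1+y^2) * Real.sqrt (1 + y^2) := (Real.mul_self_sqrt (by positivity)).symm
    _ ≤ _ := by gcongr

lemma kern_meas (σ : ℝ) : Measurable (fun y : ℝ => kern (σ + y * Complex.I)) := by
  unfold kern; fun_prop

lemma kern_integrable {σ : ℝ} (hσ : 1 ≤ σ) : Integrable (fun y : ℝ => kern (σ + y * Complex.I)) := by
  refine Integrable.mono' integrable_inv_one_add_sq (kern_meas σ).aestronglyMeasurable ?_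
  exact Filter.Eventually.of_forall (fun y => kern_norm hσ y)

lemma perron_one {σ : ℝ} (hσ : 1 ≤ σ) {u : ℝ} (hu : 0 < u) :
    (1 / (2 * π) : ℝ) • ∫ y : ℝ, (u:ℂ) ^ (-(σ + y * Complex.I) : ℂ) * kern (σ + y * Complex.I) =
      ((max (1 - u) 0 : ℝ) : ℂ) := by
  have hm : ∀ y : ℝ, mellin tent (σ + y * Complex.I) = kern (σ + y * Complex.I) := fun y =>
    (tent_mellin (by simp; linarith)).2
  have hc : ContinuousAt tent u := by
    have : (fun t : ℝ => ((max (1 - t) 0 : ℝ) : ℂ)) =ᶠ[nhds u] tent := by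
      filter_upwards [lt_mem_nhds hu] with t ht
      exact (tent_eq ht).symm
    refine ContinuousAt.congr ?_ this
    exact (by fun_prop : Continuous (fun t : ℝ => ((max (1 - t) 0 : ℝ) : ℂ))).continuousAt
  have := mellinInv_mellin_eq σ tent hu (tent_mellin (by simp; linarith)).1
    (by unfold Complex.VerticalIntegrable; simp_rw [hm]; exact kern_integrable hσ) hc
  rw [tent_eq hu] at this
  rw [← this]
  unfold mellinInv
  simp_rw [hm, smul_eq_mul]

lemma half_integrable : Integrable (fun y : ℝ => (1 + y^2)⁻¹ * (1 + |y|) ^ (1/2 : ℝ)) := by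
  have h := integrable_rpow_neg_one_add_norm_sq (E := ℝ) (μ := volume) (r := 3/2) (by norm_num)
  refine (h.const_mul 2).mono' (by fun_prop) (Filter.Eventually.of_forall fun y => ?_)
  have hp : 0 < 1 + y^2 := by positivity
  rw [Real.norm_of_nonneg (by positivity), Real.norm_eq_abs, sq_abs]
  have : (1 + |y|) ^ (1/2:ℝ) ≤ 2 * (1 + y^2) ^ (1/4:ℝ) := by
    calc (1 + |y|) ^ (1/2:ℝ) ≤ (2 * (1 + y^2) ^ (1/2:ℝ)) ^ (1/2:ℝ) := by
          gcongr
          rw [← Real.sqrt_eq_rpow]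
          have a1 : 1 ≤ √(1+y^2) := Real.one_le_sqrt.mpr (by nlinarith)
          have a2 : |y| ≤ √(1+y^2) := Real.abs_le_sqrt (by linarith)
          linarith
      _ = 2 ^ (1/2:ℝ) * (1+y^2)^(1/4:ℝ) := by
          rw [Real.mul_rpow (by norm_num) (by positivity), ← Real.rpow_mul hp.le]; norm_num
      _ ≤ 2 ^ (1:ℝ) * (1+y^2)^(1/4:ℝ) := by
          gcongr <;> norm_num
      _ = _ := by norm_num
  calc (1 + y^2)⁻¹ * (1 + |y|) ^ (1/2 : ℝ) ≤ (1+y^2)⁻¹ * (2 * (1 + y^2) ^ (1/4:ℝ)) := by gcongr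
    _ = 2 * ((1+y^2)^(-1:ℝ) * (1+y^2)^(1/4:ℝ)) := by rw [Real.rpow_neg_one]; ring
    _ = _ := by rw [← Real.rpow_add hp]; norm_num

lemma perron_bound : ∃ K > 0, ∀ (a : ℕ → ℂ) (x σ C : ℝ), 0 < x → 1 ≤ σ → LSeriesSummable a σ → 
    (∀ y : ℝ, ‖LSeries a (σ + y * Complex.I)‖ ≤ C * (1 + |y|) ^ (1/2:ℝ)) → 
    ‖∑ n ∈ Icc 1 ⌊x⌋₊, a n * (1 - n / x)‖ ≤ K * C * x ^ σ := by
  refine ⟨∫ y : ℝ, (1 + y^2)⁻¹ * (1 + |y|) ^ (1/2 : ℝ) + (1+y^2)⁻¹, ?_, ?_⟩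
  · have : 0 ≤ ∫ y : ℝ, (1 + y^2)⁻¹ * (1 + |y|) ^ (1/2 : ℝ) := integral_nonneg (fun y => by positivity)
    rw [integral_add half_integrable integrable_inv_one_add_sq, integral_univ_inv_one_add_sq]
    linarith [Real.pi_pos]
  intro a x σ C hx hσ hsum hC
  set s : ℝ → ℂ := fun y => σ + y * Complex.I with hs
  have hsre : ∀ y, (s y).re = σ := by intro y; simp [hs]
  have hsum' : ∀ y, LSeriesSummable a (s y) := by
    intro y
    exact (LSeriesSummable_iff_of_re_eq_re (by simp [hs])).mp hsum
  set F : ℕ → ℝ → ℂ := fun n y => LSeries.term a (s y) n * ((x:ℂ) ^ (s y) * kern (s y)) with hF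
  have hxn : ∀ y, ‖(x:ℂ) ^ (s y)‖ = x ^ σ := by
    intro y; rw [Complex.norm_cpow_eq_rpow_re_of_pos hx, hsre]
  have hFn : ∀ n y, ‖F n y‖ = ‖LSeries.term a σ n‖ * x ^ σ * ‖kern (s y)‖ := by
    intro n y
    rw [hF]; simp only [norm_mul, hxn]
    rw [LSeries.norm_term_eq, LSeries.norm_term_eq, hsre]; simp only [Complex.ofReal_re]; ring
  have hmeas : ∀ n, Measurable (F n) := by
    intro n
    rw [hF]
    simp only [LSeries.term_def, hs]
    by_cases hn : n = 0
    · simp [hn]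
    · simp only [hn, if_false]
      have := kern_meas σ
      have hx0 : (x:ℂ) ≠ 0 := by exact_mod_cast hx.ne'
      have hn0 : (n:ℂ) ≠ 0 := by exact_mod_cast hn
      refine Measurable.mul ?_ (Measurable.mul ?_ this)
      · refine Measurable.div measurable_const ?_
        apply Continuous.measurable
        exact Continuous.const_cpow (by fun_prop) (Or.inl hn0)
      · apply Continuous.measurable
        exact Continuous.const_cpow (by fun_prop) (Or.inl hx0)
  have hintg : ∀ n, Integrable (F n) := by
    intro n
    refine Integrable.mono' ((kern_integrable hσ).norm.const_mul (‖LSeries.term a σ n‖ * x ^ σ)) (hmeas n).aestronglyMeasurable ?_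
    exact Filter.Eventually.of_forall (fun y => (hFn n y).le)
  have hS : Summable fun n => ∫ y, ‖F n y‖ := by
    simp_rw [hFn, integral_const_mul]
    exact (hsum.norm.mul_right _).mul_right _
  have hswap := integral_tsum_of_summable_integral_norm hintg hS
  have hterm : ∀ n : ℕ, n ≠ 0 → (1 / (2 * π) : ℝ) • ∫ y, F n y = a n * ((max (1 - n / x) 0 : ℝ) : ℂ) := by
    intro n hn
    have hn0 : (0:ℝ) < n := by positivity
    rw [← perron_one hσ (u := n / x) (by positivity), mul_smul_comm, ← integral_const_mul]
    congr 2
    ext y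
    rw [hF]; simp only [LSeries.term_of_ne_zero hn]
    have : (((n:ℝ) / x : ℝ) : ℂ) ^ (-(σ + y * Complex.I) : ℂ) = (x:ℂ) ^ (s y) / (n:ℂ) ^ (s y) := by
      change _ ^ (-(s y)) = _
      rw [div_eq_mul_inv, Complex.ofReal_mul, Complex.mul_cpow_ofReal_nonneg hn0.le (by positivity),
        Complex.ofReal_inv, Complex.inv_cpow, Complex.cpow_neg, Complex.cpow_neg, inv_inv]
      · simp; ring
      · rw [Complex.arg_ofReal_of_nonneg hx.le]; exact Real.pi_pos.ne
    rw [this]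
    ring
  have h0 : F 0 = 0 := by ext y; simp [hF]
  have hLHS : ∑ n ∈ Icc 1 ⌊x⌋₊, a n * (1 - n / x) = (1 / (2 * π) : ℝ) • ∑' n, ∫ y, F n y := by
    rw [← tsum_const_smul'', tsum_eq_sum (s := Icc 1 ⌊x⌋₊)]
    · apply Finset.sum_congr rfl
      intro n hn
      rw [Finset.mem_Icc] at hn
      rw [hterm n (by omega), max_eq_left]
      · push_cast; rfl
      · have : (n:ℝ) ≤ x := (Nat.le_floor_iff hx.le).mp hn.2
        rw [sub_nonneg, div_le_one hx]; exact this
    · intro n hn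
      by_cases hn0 : n = 0
      · rw [hn0, h0]; simp
      · rw [hterm n hn0, max_eq_right]
        · simp
        · have : ¬ n ≤ ⌊x⌋₊ := by
            intro h; exact hn (by rw [Finset.mem_Icc]; omega)
          rw [Nat.le_floor_iff hx.le] at this
          rw [sub_nonpos, one_le_div hx]; linarith
  rw [hLHS, hswap]
  have hts : ∀ y, ∑' n, F n y = LSeries a (s y) * ((x:ℂ) ^ (s y) * kern (s y)) := by
    intro y
    simp only [hF]
    rw [tsum_mul_right]; rfl
  simp_rw [hts]
  have hC0 : 0 ≤ C := by
    have := (norm_nonneg _).trans (hC 0)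
    simpa using this
  have hbound : ‖∫ y, LSeries a (s y) * ((x:ℂ) ^ (s y) * kern (s y))‖ ≤ ∫ y : ℝ, C * x ^ σ * ((1 + y^2)⁻¹ * (1 + |y|) ^ (1/2 : ℝ) + (1+y^2)⁻¹) := by
    apply norm_integral_le_of_norm_le
    · exact (half_integrable.add integrable_inv_one_add_sq).const_mul _
    · refine Filter.Eventually.of_forall (fun y => ?_)
      rw [norm_mul, norm_mul, hxn]
      calc _ ≤ (C * (1 + |y|) ^ (1/2:ℝ)) * (x ^ σ * (1+y^2)⁻¹) := by
            gcongr
            · exact hC y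
            · exact kern_norm hσ y
        _ = C * x ^ σ * ((1 + y^2)⁻¹ * (1 + |y|) ^ (1/2 : ℝ)) := by ring
        _ ≤ _ := by
            gcongr
            have : 0 ≤ (1 + y^2)⁻¹ := by positivity
            linarith
  rw [integral_const_mul] at hbound
  rw [norm_smul]
  have hpi : ‖(1 / (2 * π) : ℝ)‖ ≤ 1 := by
    rw [Real.norm_of_nonneg (by positivity), div_le_one (by positivity)]
    linarith [Real.pi_gt_three]
  calc _ ≤ 1 * ‖∫ y, LSeries a (s y) * ((x:ℂ) ^ (s y) * kern (s y))‖ := by gcongr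
    _ ≤ _ := by rw [one_mul]; refine hbound.trans (le_of_eq (by ring))

lemma lseries_mu_bound (j : ℕ) : ∃ C > 0, ∀ s : ℂ, 1 < s.re → s.re ≤ 2 →
    ‖LSeries (LSeries.logMul^[j] (fun n => ((moebius n : ℤ) : ℂ))) s‖ ≤ C * (1 + |s.im|) ^ (1/2 : ℝ) := by
  obtain ⟨C, hC, H⟩ := zinv_bound j
  refine ⟨C, hC, fun s h1 h2 => ?_⟩
  have h := LSeries_iteratedDeriv (f := fun n => ((moebius n : ℤ) : ℂ)) j (s := s) (by
    rw [abscissaOfAbsConv_moebius]; exact_mod_cast h1)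
  have he : (LSeries fun n => ((moebius n : ℤ) : ℂ)) =ᶠ[nhds s] fun s => (riemannZeta s)⁻¹ := by
    have : ∀ᶠ z : ℂ in nhds s, 1 < z.re := (isOpen_lt continuous_const Complex.continuous_re).mem_nhds h1
    filter_upwards [this] with z hz
    have := LSeries_zeta_mul_Lseries_moebius hz
    rw [LSeries_zeta_eq_riemannZeta hz] at this
    exact eq_inv_of_mul_eq_one_right this
  have h3 := H s h1 h2
  rw [← he.iteratedDeriv_eq j, h, norm_mul, norm_pow, norm_neg, norm_one, one_pow, one_mul] at h3
  exact h3

lemma logMul_iter (f : ℕ → ℂ) (j n : ℕ) : (LSeries.logMul^[j] f) n = ((Real.log n ^ j : ℝ) : ℂ) * f n := by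
  induction j with
  | zero => simp
  | succ j ih =>
    rw [Function.iterate_succ_apply']
    unfold LSeries.logMul at ih ⊢
    rw [ih, ← Complex.natCast_log]; push_cast; ring

/-- Smoothed sum bound. -/
lemma smooth_bound (j : ℕ) : ∃ C > 0, ∀ x : ℝ, 3 ≤ x →
    |∑ n ∈ Icc 1 ⌊x⌋₊, (moebius n : ℝ) * Real.log n ^ j * (x - n)| ≤ C * x ^ 2 := by
  obtain ⟨K, hK, H⟩ := perron_bound
  obtain ⟨C, hC, H2⟩ := lseries_mu_bound j
  refine ⟨K * C * Real.exp 1, by positivity, fun x hx => ?_⟩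
  have hx0 : 0 < x := by linarith
  have hlog : 1 ≤ Real.log x := by
    rw [Real.le_log_iff_exp_le hx0]; linarith [Real.exp_one_lt_d9]
  set σ := 1 + 1 / Real.log x with hσ
  have hσ1 : 1 < σ := by rw [hσ]; have : 0 < 1 / Real.log x := by positivity
                         linarith
  have hσ2 : σ ≤ 2 := by
    rw [hσ]; have : 1 / Real.log x ≤ 1 := by rw [div_le_one] <;> linarith
    linarith
  have h := H (LSeries.logMul^[j] (fun n => ((moebius n : ℤ) : ℂ))) x σ C hx0 hσ1.le
    (LSeriesSummable_of_abscissaOfAbsConv_lt_re (by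
      rw [LSeries.absicssaOfAbsConv_logPowMul, abscissaOfAbsConv_moebius]
      exact_mod_cast hσ1)) (by
      intro y
      have := H2 (σ + y * Complex.I) (by simpa using hσ1) (by simpa using hσ2)
      simpa using this)
  have hxs : x ^ σ = x * Real.exp 1 := by
    rw [hσ, Real.rpow_add hx0, Real.rpow_one, Real.rpow_def_of_pos hx0]
    congr 2; field_simp
  rw [hxs] at h
  have e : (∑ n ∈ Icc 1 ⌊x⌋₊, (LSeries.logMul^[j] (fun n => ((moebius n : ℤ) : ℂ))) n * (1 - n / x)) =
      (((∑ n ∈ Icc 1 ⌊x⌋₊, (moebius n : ℝ) * Real.log n ^ j * (x - n)) / x : ℝ) : ℂ) := by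
    rw [Finset.sum_div]
    push_cast
    apply Finset.sum_congr rfl
    intro n _
    rw [logMul_iter]
    have : (x:ℂ) ≠ 0 := by exact_mod_cast hx0.ne'
    push_cast
    field_simp
  rw [e, Complex.norm_real, Real.norm_eq_abs, abs_div, abs_of_pos hx0, div_le_iff₀ hx0] at h
  refine h.trans (le_of_eq (by ring))

end MOB

open Finset ArithmeticFunction Real

namespace MOB

lemma mu_abs_le (n : ℕ) : |(moebius n : ℝ)| ≤ 1 := by
  exact_mod_cast abs_moebius_le_one (n := n)

lemma log_pow_le (B : ℕ) {ε : ℝ} (hε : 0 < ε) : ∃ C > 0, ∀ x : ℝ, 1 ≤ x → (1 + Real.log x) ^ B ≤ C * x ^ ε := by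
  set δ := ε / (B + 1) with hδ
  have hδ0 : 0 < δ := by positivity
  refine ⟨(1 + 1/δ)^B, by positivity, fun x hx => ?_⟩
  have h1 : Real.log x ≤ x ^ δ / δ := Real.log_le_rpow_div (by linarith) hδ0
  have h2 : 1 ≤ x ^ δ := Real.one_le_rpow hx hδ0.le
  have h0 := Real.log_nonneg hx
  calc (1 + Real.log x)^B ≤ ((1 + 1/δ) * x ^ δ) ^ B := by
        gcongr
        have : (1 + 1/δ) * x ^ δ = x ^ δ + x ^ δ / δ := by ring
        linarith
    _ = (1+1/δ)^B * x ^ (δ * B) := by rw [mul_pow, Real.rpow_mul_natCast (by linarith)]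
    _ ≤ (1+1/δ)^B * x ^ ε := by
        gcongr
        · rw [hδ, div_mul_eq_mul_div, div_le_iff₀ (by positivity)]; nlinarith

lemma Icc_split {K N : ℕ} (h : K ≤ N) (f : ℕ → ℝ) :
    ∑ n ∈ Icc 1 N, f n = ∑ n ∈ Icc 1 K, f n + ∑ n ∈ Ioc K N, f n := by
  have e1 : Icc 1 N = Ioc 0 N := rfl
  have e2 : Icc 1 K = Ioc 0 K := rfl
  rw [e1, e2, Finset.sum_Ioc_consecutive f (Nat.zero_le _) h]

lemma unsmooth (B : ℕ) : ∃ C > 0, ∀ N : ℕ, 1 ≤ N →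
    |∑ n ∈ Icc 1 N, (moebius n : ℝ) * Real.log n ^ (2*B)| ≤ C * N * (1 + Real.log N) ^ B := by
  obtain ⟨C, hC, H⟩ := smooth_bound (2*B)
  refine ⟨5 * C + 4 ^ B + 3 ^ B, by positivity, fun N hN => ?_⟩
  have hN1 : (1:ℝ) ≤ N := by exact_mod_cast hN
  set l := 1 + Real.log N with hl
  have hl1 : 1 ≤ l := by rw [hl]; linarith [Real.log_nonneg hN1]
  set a : ℕ → ℝ := fun n => (moebius n : ℝ) * Real.log n ^ (2*B) with ha
  have habs : ∀ n : ℕ, |a n| ≤ Real.log n ^ (2*B) := by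
    intro n
    have : 0 ≤ Real.log n ^ (2*B) := pow_nonneg (Real.log_natCast_nonneg n) _
    rw [ha]; simp only [abs_mul, abs_of_nonneg this]
    nlinarith [mu_abs_le n]
  change |∑ n ∈ Icc 1 N, a n| ≤ _
  by_cases hN3 : N < 3
  · calc |∑ n ∈ Icc 1 N, a n| ≤ ∑ n ∈ Icc 1 N, |a n| := Finset.abs_sum_le_sum_abs _ _
      _ ≤ ∑ n ∈ Icc 1 N, l ^ (2*B) := by
        apply Finset.sum_le_sum
        intro n hn
        rw [Finset.mem_Icc] at hn
        have hn1 : (1:ℝ) ≤ n := by exact_mod_cast hn.1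
        have hn2 : (n:ℝ) ≤ N := by exact_mod_cast hn.2
        refine (habs n).trans (pow_le_pow_left₀ (Real.log_natCast_nonneg n) ?_ _)
        have := Real.log_le_log (by linarith) hn2
        linarith
      _ = N * (l ^ B * l ^ B) := by rw [Finset.sum_const, Nat.card_Icc, nsmul_eq_mul, Nat.add_sub_cancel, two_mul, pow_add]
      _ ≤ N * (3 ^ B * l ^ B) := by
        gcongr
        have : Real.log N ≤ N - 1 := Real.log_le_sub_one_of_pos (by linarith)
        have h2 : (N:ℝ) ≤ 2 := by exact_mod_cast (by omega : N ≤ 2)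
        linarith
      _ ≤ _ := by
        have : 0 ≤ (N:ℝ) * l ^ B := by positivity
        have h4 : (0:ℝ) < 4 ^ B := by positivity
        nlinarith
  push Not at hN3
  have hN3' : (3:ℝ) ≤ N := by exact_mod_cast hN3
  set h : ℝ := N / l ^ B with hh
  have hh0 : 0 < h := by positivity
  have hhN : h ≤ N := div_le_self (by linarith) (one_le_pow₀ hl1)
  have w1 := H N hN3'
  have w2 := H (N + h) (by linarith)
  rw [Nat.floor_natCast] at w1
  set P := ⌊(N:ℝ) + h⌋₊ with hP
  have hPN : N ≤ P := Nat.le_floor (by linarith)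
  have hPr : (P:ℝ) ≤ N + h := Nat.floor_le (by positivity)
  rw [Icc_split hPN] at w2
  have e : ∑ n ∈ Icc 1 N, (moebius n : ℝ) * Real.log n ^ (2*B) * ((N + h) - n) =
      ∑ n ∈ Icc 1 N, (moebius n : ℝ) * Real.log n ^ (2*B) * (N - n) + h * ∑ n ∈ Icc 1 N, a n := by
    rw [Finset.mul_sum, ← Finset.sum_add_distrib]
    apply Finset.sum_congr rfl
    intro n _
    simp only [ha]; ring
  rw [e] at w2
  have hlogP : ∀ n ∈ Ioc N P, Real.log n ≤ 2 * l := by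
    intro n hn
    rw [Finset.mem_Ioc] at hn
    have hn1 : (N:ℝ) < n := by exact_mod_cast hn.1
    have hn2 : (n:ℝ) ≤ P := by exact_mod_cast hn.2
    have : Real.log n ≤ Real.log (2 * N) := Real.log_le_log (by linarith) (by linarith)
    rw [Real.log_mul (by norm_num) (by linarith)] at this
    have := Real.log_two_lt_d9
    rw [hl]; have := Real.log_nonneg hN1; linarith
  have w3 : |∑ n ∈ Ioc N P, (moebius n : ℝ) * Real.log n ^ (2*B) * ((N + h) - n)| ≤ h * (h * (2 * l) ^ (2*B)) := by
    calc _ ≤ ∑ n ∈ Ioc N P, |(moebius n : ℝ) * Real.log n ^ (2*B) * ((N + h) - n)| := Finset.abs_sum_le_sum_abs _ _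
      _ ≤ ∑ n ∈ Ioc N P, (2 * l) ^ (2*B) * h := by
        apply Finset.sum_le_sum
        intro n hn
        have hn' := hn
        rw [Finset.mem_Ioc] at hn'
        have hn1 : (N:ℝ) < n := by exact_mod_cast hn'.1
        have hn2 : (n:ℝ) ≤ P := by exact_mod_cast hn'.2
        rw [abs_mul]
        gcongr
        · exact (habs n).trans (pow_le_pow_left₀ (Real.log_natCast_nonneg n) (hlogP n hn) _)
        · rw [abs_of_nonneg] <;> linarith
      _ = ((P:ℝ) - N) * ((2 * l) ^ (2*B) * h) := by
        rw [Finset.sum_const, Nat.card_Ioc, nsmul_eq_mul, Nat.cast_sub hPN]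
      _ ≤ h * ((2 * l) ^ (2*B) * h) := by gcongr; linarith
      _ = _ := by ring
  have w4 : |h * ∑ n ∈ Icc 1 N, a n| ≤ C * (N + h)^2 + C * N^2 + h * (h * (2 * l) ^ (2*B)) := by
    rw [abs_le] at *
    constructor <;> linarith [w1.1, w1.2, w2.1, w2.2, w3.1, w3.2]
  rw [abs_mul, abs_of_pos hh0] at w4
  have w5 : h * |∑ n ∈ Icc 1 N, a n| ≤ h * ((5 * C + 4 ^ B) * N * l ^ B) := by
    refine w4.trans ?_
    have e1 : h * l ^ B = N := by rw [hh]; field_simp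
    have e2 : C * (N + h)^2 + C * N^2 ≤ 5 * C * N^2 := by
      have : (N+h)^2 ≤ (N+N)^2 := by gcongr
      nlinarith
    have e3 : (2 * l)^(2*B) = 4 ^ B * l ^ B * l ^ B := by
      rw [mul_pow, pow_mul]; norm_num; rw [two_mul, pow_add]; ring
    have e4 : (N:ℝ)^2 = h * (N * l ^ B) := by rw [sq]; nth_rewrite 1 [← e1]; ring
    have e5 : h * (h * (2 * l) ^ (2*B)) = h * (4 ^ B * N * l ^ B) := by
      rw [e3]; rw [show h * (h * (4 ^ B * l ^ B * l ^ B)) = h * (4 ^ B * (h * l^B) * l ^ B) by ring, e1]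
    rw [e5]
    calc _ ≤ 5 * C * N^2 + h * (4 ^ B * N * l ^ B) := by linarith
      _ = _ := by rw [e4]; ring
  have w6 := le_of_mul_le_mul_left w5 hh0
  refine w6.trans ?_
  have : (0:ℝ) < 3 ^ B := by positivity
  have h7 : 5 * C + 4 ^ B ≤ 5 * C + 4 ^ B + 3 ^ B := by linarith
  gcongr

lemma abel_ineq (a w : ℕ → ℝ) (K N : ℕ) (R : ℝ) 
    (hw : ∀ n, K < n → 0 ≤ w n) (hanti : ∀ n, K < n → w (n+1) ≤ w n)
    (hS : ∀ m, m ≤ N → |∑ n ∈ Ioc K m, a n| ≤ R) (hKN : K ≤ N) :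
    |∑ n ∈ Ioc K N, a n * w n| ≤ R * w (K+1) := by
  have hR : 0 ≤ R := (abs_nonneg _).trans (hS N le_rfl)
  rcases hKN.eq_or_lt with rfl | hlt
  · simp; exact mul_nonneg hR (hw _ (by omega))
  have key : ∀ m, K + 1 ≤ m → m ≤ N → 
      |∑ n ∈ Ioc K m, a n * w n - w m * ∑ n ∈ Ioc K m, a n| ≤ R * (w (K+1) - w m) := by
    intro m hm
    induction m, hm using Nat.le_induction with
    | base => intro _; simp [mul_comm]
    | succ m hm ih =>
      intro hmN
      have h1 := ih (by omega)
      have h2 := hS m (by omega)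
      rw [Finset.sum_Ioc_succ_top (by omega), Finset.sum_Ioc_succ_top (by omega)]
      have h3 : |(w m - w (m+1)) * ∑ n ∈ Ioc K m, a n| ≤ (w m - w (m+1)) * R := by
        have := hanti m (by omega)
        rw [abs_mul, abs_of_nonneg (by linarith)]
        exact mul_le_mul_of_nonneg_left h2 (by linarith)
      rw [abs_le] at *
      constructor <;> linarith [h1.1, h1.2, h3.1, h3.2]
  have h1 := key N hlt le_rfl
  have h2 : |w N * ∑ n ∈ Ioc K N, a n| ≤ w N * R := by
    rw [abs_mul, abs_of_nonneg (hw N hlt)]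
    exact mul_le_mul_of_nonneg_left (hS N le_rfl) (hw N hlt)
  rw [abs_le] at *
  constructor <;> linarith [h1.1, h1.2, h2.1, h2.2]

lemma mertens_nat (B : ℕ) : ∃ C > 0, ∀ N : ℕ, 1 ≤ N →
    |∑ n ∈ Icc 1 N, (moebius n : ℝ)| ≤ C * (N / (1 + Real.log N) ^ B) := by
  obtain ⟨C, hC, H⟩ := unsmooth B
  obtain ⟨D, hD, HD⟩ := log_pow_le B (ε := 1/2) (by norm_num)
  refine ⟨1 + D + 2 * C * 6 ^ (2 * B), by positivity, fun N hN => ?_⟩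
  have hN1 : (1:ℝ) ≤ N := by exact_mod_cast hN
  set l := 1 + Real.log N with hl
  have hl1 : 1 ≤ l := by rw [hl]; linarith [Real.log_nonneg hN1]
  rcases hN.eq_or_lt with h1 | h2
  · rw [hl, ← h1]; simp; nlinarith [pow_pos (by norm_num : (0:ℝ) < 6) (2*B)]
  set K := Nat.sqrt N with hK
  have hK1 : 1 ≤ K := Nat.sqrt_pos.mpr (by omega)
  have hKN : K ≤ N := Nat.sqrt_le_self N
  rw [Icc_split hKN]
  have b1 : |∑ n ∈ Icc 1 K, (moebius n : ℝ)| ≤ D * (N / l ^ B) := by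
    calc _ ≤ ∑ n ∈ Icc 1 K, |(moebius n : ℝ)| := Finset.abs_sum_le_sum_abs _ _
      _ ≤ ∑ n ∈ Icc 1 K, (1:ℝ) := Finset.sum_le_sum (fun n _ => mu_abs_le n)
      _ = K := by simp
      _ ≤ √N := Real.nat_sqrt_le_real_sqrt
      _ ≤ D * (N / l ^ B) := by
        have := HD N hN1
        rw [← Real.sqrt_eq_rpow] at this
        rw [mul_div_assoc', le_div_iff₀ (by positivity)]
        calc √N * l ^ B ≤ √N * (D * √N) := by gcongr
          _ = D * (√N * √N) := by ring
          _ = _ := by rw [Real.mul_self_sqrt (by linarith)]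
  set a : ℕ → ℝ := fun n => (moebius n : ℝ) * Real.log n ^ (2*B) with ha
  set w : ℕ → ℝ := fun n => (Real.log n ^ (2*B))⁻¹ with hw
  have hlp : ∀ n : ℕ, K < n → 0 < Real.log n := by
    intro n hn; apply Real.log_pos; exact_mod_cast (by omega : 1 < n)
  have b2 : ∑ n ∈ Ioc K N, (moebius n : ℝ) = ∑ n ∈ Ioc K N, a n * w n := by
    apply Finset.sum_congr rfl
    intro n hn
    rw [Finset.mem_Ioc] at hn
    have := hlp n hn.1
    simp only [ha, hw]
    field_simp
  have hA : ∀ m, 1 ≤ m → m ≤ N → |∑ n ∈ Icc 1 m, a n| ≤ C * N * l ^ B := by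
    intro m hm hmN
    refine (H m hm).trans ?_
    have hm1 : (1:ℝ) ≤ m := by exact_mod_cast hm
    have hmN' : (m:ℝ) ≤ N := by exact_mod_cast hmN
    have := Real.log_nonneg hm1
    have h9 : 1 + Real.log m ≤ l := by rw [hl]; gcongr
    gcongr
  have b3 := abel_ineq a w K N (2 * (C * N * l ^ B)) 
    (fun n hn => by have := hlp n hn; simp only [hw]; positivity)
    (fun n hn => by
      have := hlp n hn
      simp only [hw]
      have h2 : (0:ℝ) < n := by exact_mod_cast (by omega : 0 < n)
      gcongr
      linarith)
    (fun m hm => by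
      rcases lt_or_ge m K with h | h
      · rw [Finset.Ioc_eq_empty (by omega)]; simp; positivity
      · have e := Icc_split h a
        have h1 := hA m (by omega) hm
        have h2 := hA K hK1 hKN
        rw [abs_le] at *
        constructor <;> linarith [h1.1, h1.2, h2.1, h2.2]) hKN
  have b4 : l / 6 ≤ Real.log ((K+1 : ℕ) : ℝ) := by
    have h3 : (N:ℝ) ≤ ((K+1 : ℕ) : ℝ)^2 := by
      have := Nat.lt_succ_sqrt N
      rw [← hK] at this
      have : N ≤ (K+1)^2 := by rw [sq]; exact this.le
      exact_mod_cast this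
    have h4 : Real.log N ≤ 2 * Real.log ((K+1 : ℕ) : ℝ) := by
      have := Real.log_le_log (by linarith) h3
      rw [Real.log_pow] at this; exact_mod_cast this
    have h5 : Real.log 2 ≤ Real.log N := Real.log_le_log (by norm_num) (by exact_mod_cast h2)
    have := Real.log_two_gt_d9
    rw [hl]; linarith
  have b5 : |∑ n ∈ Ioc K N, a n * w n| ≤ 2 * C * 6 ^ (2 * B) * (N / l ^ B) := by
    refine b3.trans ?_
    have : w (K+1) ≤ ((l/6) ^ (2*B))⁻¹ := by simp only [hw]; gcongr
    calc _ ≤ 2 * (C * N * l ^ B) * ((l/6) ^ (2*B))⁻¹ := by gcongr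
      _ = _ := by rw [div_pow, two_mul B, pow_add l]; field_simp
  rw [b2]
  refine (abs_add_le _ _).trans ((add_le_add b1 b5).trans ?_)
  have : 0 ≤ N / l ^ B := by positivity
  nlinarith

/-- Strong Mertens bound. -/
theorem mertens (B : ℕ) : ∃ C > 0, ∀ x : ℝ, 1 ≤ x →
    |∑ n ∈ Icc 1 ⌊x⌋₊, (moebius n : ℝ)| ≤ C * (x / (1 + Real.log x) ^ B) := by
  obtain ⟨C, hC, H⟩ := mertens_nat B
  refine ⟨C * 2 ^ B, by positivity, fun x hx => ?_⟩
  have hf : 1 ≤ ⌊x⌋₊ := Nat.le_floor (by exact_mod_cast hx)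
  have hf1 : (1:ℝ) ≤ ⌊x⌋₊ := by exact_mod_cast hf
  have h1 := H _ hf
  have h2 : (⌊x⌋₊:ℝ) ≤ x := Nat.floor_le (by linarith)
  have h3 : x < ⌊x⌋₊ + 1 := Nat.lt_floor_add_one x
  have h4 : 1 + Real.log x ≤ 2 * (1 + Real.log ⌊x⌋₊) := by
    have : Real.log x ≤ Real.log (2 * ⌊x⌋₊) := Real.log_le_log (by linarith) (by linarith)
    rw [Real.log_mul (by norm_num) (by linarith)] at this
    have := Real.log_two_lt_d9
    have := Real.log_nonneg hf1
    linarith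
  have hlx := Real.log_nonneg hx
  have hlf := Real.log_nonneg hf1
  refine h1.trans ?_
  rw [mul_assoc]
  gcongr C * ?_
  rw [mul_div_assoc', div_le_div_iff₀ (by positivity) (by positivity)]
  calc (⌊x⌋₊:ℝ) * (1 + Real.log x)^B ≤ x * (2 * (1 + Real.log ⌊x⌋₊))^B := by gcongr
    _ = _ := by rw [mul_pow]; ring

end MOB

open Finset ArithmeticFunction Real

namespace MOB

open Classical in
/-- Indicator of positive integers all of whose prime factors satisfy `P`. -/
noncomputable def chi (P : ℕ → Prop) : ArithmeticFunction ℝ :=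
  ⟨fun n => if n ≠ 0 ∧ ∀ q, q.Prime → q ∣ n → P q then 1 else 0, by simp⟩

lemma chi_eq_one {P : ℕ → Prop} {n : ℕ} (h0 : n ≠ 0) (h : ∀ q, q.Prime → q ∣ n → P q) : chi P n = 1 := by
  unfold chi
  simp only [ArithmeticFunction.coe_mk]
  rw [if_pos ⟨h0, h⟩]

lemma chi_eq_zero {P : ℕ → Prop} {n q : ℕ} (hq : q.Prime) (hqn : q ∣ n) (h : ¬ P q) : chi P n = 0 := by
  unfold chi
  simp only [ArithmeticFunction.coe_mk]
  rw [if_neg]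
  rintro ⟨_, h2⟩
  exact h (h2 q hq hqn)

lemma chi_nonneg (P : ℕ → Prop) (n : ℕ) : 0 ≤ chi P n := by
  unfold chi
  simp only [ArithmeticFunction.coe_mk]
  split_ifs <;> norm_num

lemma chi_le_one (P : ℕ → Prop) (n : ℕ) : chi P n ≤ 1 := by
  unfold chi
  simp only [ArithmeticFunction.coe_mk]
  split_ifs <;> norm_num

lemma chi_cases (P : ℕ → Prop) (n : ℕ) : chi P n = 0 ∨ (chi P n = 1 ∧ n ≠ 0 ∧ ∀ q, q.Prime → q ∣ n → P q) := by
  unfold chi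
  simp only [ArithmeticFunction.coe_mk]
  split_ifs with h
  · right; exact ⟨rfl, h⟩
  · left; rfl

lemma chi_mul (P : ℕ → Prop) {m n : ℕ} (hm : m ≠ 0) (hn : n ≠ 0) : chi P (m * n) = chi P m * chi P n := by
  rcases chi_cases P (m * n) with h | ⟨h, h0, h1⟩
  · rw [h]
    rcases chi_cases P m with h2 | ⟨h2, _, h3⟩
    · rw [h2, zero_mul]
    rcases chi_cases P n with h4 | ⟨h4, _, h5⟩
    · rw [h4, mul_zero]
    exfalso
    have := chi_eq_one (P := P) (mul_ne_zero hm hn) (fun q hq hqd => by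
      rcases hq.dvd_mul.mp hqd with h | h
      · exact h3 q hq h
      · exact h5 q hq h)
    rw [this] at h; norm_num at h
  · rw [h, chi_eq_one hm (fun q hq hd => h1 q hq (hd.mul_right _)),
      chi_eq_one hn (fun q hq hd => h1 q hq (hd.mul_left _)), one_mul]

lemma chi_one (P : ℕ → Prop) : chi P 1 = 1 :=
  chi_eq_one one_ne_zero (fun q hq hd => absurd (Nat.dvd_one.mp hd) hq.one_lt.ne')

lemma chi_mult (P : ℕ → Prop) : (chi P).IsMultiplicative :=
  ArithmeticFunction.IsMultiplicative.iff_ne_zero.mpr ⟨chi_one P, fun hm hn _ => chi_mul P hm hn⟩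

lemma chi_pow {P : ℕ → Prop} {q : ℕ} (hq : q.Prime) (h : P q) (i : ℕ) : chi P (q ^ i) = 1 := by
  apply chi_eq_one (pow_ne_zero _ hq.ne_zero)
  intro r hr hd
  rw [(Nat.prime_dvd_prime_iff_eq hr hq).mp (hr.dvd_of_dvd_pow hd)]
  exact h

lemma chi_pow_zero {P : ℕ → Prop} {q : ℕ} (hq : q.Prime) (h : ¬ P q) (i : ℕ) : chi P (q ^ (i+1)) = 0 :=
  chi_eq_zero hq (dvd_pow_self q (by omega)) h

/-- Möbius restricted to integers with all prime factors satisfying `P`. -/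
noncomputable def mf (P : ℕ → Prop) : ArithmeticFunction ℝ :=
  ((moebius : ArithmeticFunction ℝ)).pmul (chi P)

lemma mf_apply (P : ℕ → Prop) (n : ℕ) : mf P n = (moebius n : ℝ) * chi P n := rfl

lemma mf_mult (P : ℕ → Prop) : (mf P).IsMultiplicative :=
  (isMultiplicative_moebius.intCast).pmul (chi_mult P)

lemma mf_abs (P : ℕ → Prop) (n : ℕ) : |mf P n| ≤ chi P n := by
  rw [mf_apply, abs_mul, abs_of_nonneg (chi_nonneg P n)]
  have := mu_abs_le n
  nlinarith [chi_nonneg P n]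

lemma mf_pow_ge (P : ℕ → Prop) {q : ℕ} (hq : q.Prime) (i : ℕ) : mf P (q ^ (i + 2)) = 0 := by
  rw [mf_apply, moebius_apply_prime_pow hq (by omega)]
  simp

lemma conv (P Q : ℕ → Prop) (hPQ : ∀ q, Q q → P q) : mf P * chi Q = mf (fun q => P q ∧ ¬ Q q) := by
  rw [ArithmeticFunction.IsMultiplicative.eq_iff_eq_on_prime_powers _ ((mf_mult P).mul (chi_mult Q)) _ (mf_mult _)]
  intro q i hq
  rw [ArithmeticFunction.mul_apply, Nat.sum_divisorsAntidiagonal (fun a b => mf P a * chi Q b), Nat.sum_divisors_prime_pow hq]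
  rcases i with _ | i
  · simp [mf_apply, chi_one]
  rw [Finset.sum_range_succ', Finset.sum_range_succ']
  have hz : ∑ k ∈ range i, mf P (q ^ (k + 1 + 1)) * chi Q (q ^ (i+1) / q ^ (k+1+1)) = 0 := by
    apply Finset.sum_eq_zero
    intro k _
    rw [mf_pow_ge P hq k, zero_mul]
  rw [hz]
  have e1 : q ^ (i+1) / q ^ (0+1) = q ^ i := by
    rw [Nat.pow_div (by omega) hq.pos]; simp
  rw [e1]
  simp only [zero_add, pow_zero, pow_one, Nat.div_one]
  by_cases hQ : Q q
  · have h1 : chi P q = 1 := by simpa using chi_pow hq (hPQ q hQ) 1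
    rw [chi_pow hq hQ, chi_pow hq hQ, mf_apply, mf_apply, mf_apply, h1, chi_one, chi_pow_zero hq (by simp [hQ]),
      moebius_apply_prime hq]
    simp
  · rw [chi_pow_zero hq hQ]
    rcases i with _ | i
    · have h1 : chi P q = chi (fun q => P q ∧ ¬ Q q) q := by
        by_cases hP : P q
        · have h1 : chi P q = 1 := by simpa using chi_pow hq hP 1
          have h2 : chi (fun q => P q ∧ ¬ Q q) q = 1 := by simpa using chi_pow (P := fun q => P q ∧ ¬ Q q) hq ⟨hP, hQ⟩ 1
          rw [h1, h2]
        · rw [chi_eq_zero hq dvd_rfl hP, chi_eq_zero hq dvd_rfl (by simp [hP])]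
      simp [mf_apply, h1, chi_one]
    · rw [chi_pow_zero hq hQ, mf_pow_ge _ hq]; simp

/-- Partial sums. -/
noncomputable def MS (P : ℕ → Prop) (N : ℕ) : ℝ := ∑ m ∈ Ioc 0 N, mf P m

lemma MS_conv (P Q : ℕ → Prop) (hPQ : ∀ q, Q q → P q) (N : ℕ) :
    MS (fun q => P q ∧ ¬ Q q) N = ∑ d ∈ Ioc 0 N, chi Q d * MS P (N / d) := by
  unfold MS
  rw [← conv P Q hPQ, mul_comm, sum_Ioc_mul_eq_sum_sum]

lemma MS_abs (P : ℕ → Prop) (N : ℕ) : |MS P N| ≤ ∑ m ∈ Ioc 0 N, chi P m :=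
  (Finset.abs_sum_le_sum_abs _ _).trans (Finset.sum_le_sum fun m _ => mf_abs P m)

lemma MS_rough (p N : ℕ) : MS (fun q => p < q) N = ∑ d ∈ Ioc 0 N, chi (fun q => q ≤ p) d * MS (fun _ => True) (N / d) := by
  rw [← MS_conv _ _ (fun _ _ => trivial)]
  congr 1
  ext q; simp

/-- indicator of `n = 1` or `n` prime power -/
noncomputable def pp (n : ℕ) : ℝ := if n = 1 ∨ IsPrimePow n then 1 else 0

lemma pp_nonneg (n : ℕ) : 0 ≤ pp n := by unfold pp; split_ifs <;> norm_num

lemma omega_sum (P : ℕ → Prop) (N : ℕ) :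
    |∑ m ∈ Ioc 0 N, mf P m * (1 + (m.primeFactors.card : ℝ))| ≤ ∑ d ∈ Ioc 0 N, pp d * |MS P (N / d)| := by
  classical
  set S := (Ioc 0 N).filter (fun q => q.Prime ∧ P q) with hS
  have hω : ∀ m ∈ Ioc 0 N, mf P m * (m.primeFactors.card : ℝ) = 
      ∑ q ∈ S, (mf P m - mf (fun r => P r ∧ ¬ r = q) m) := by
    intro m hm
    rw [Finset.mem_Ioc] at hm
    rcases chi_cases P m with h | ⟨h, h0, h1⟩
    · have : ∀ q, mf (fun r => P r ∧ ¬ r = q) m = 0 := by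
        intro q
        rw [mf_apply]
        rcases chi_cases (fun r => P r ∧ ¬ r = q) m with h2 | ⟨_, _, h3⟩
        · rw [h2, mul_zero]
        · exfalso
          rw [chi_eq_one hm.1.ne' (fun r hr hd => (h3 r hr hd).1)] at h
          norm_num at h
      simp [mf_apply P, h, this]
    · have e : ∀ q ∈ S, mf P m - mf (fun r => P r ∧ ¬ r = q) m = if q ∣ m then mf P m else 0 := by
        intro q hq
        rw [hS, Finset.mem_filter] at hq
        split_ifs with hd
        · rw [mf_apply (fun r => P r ∧ ¬ r = q), chi_eq_zero hq.2.1 hd (by simp)]; simp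
        · rw [mf_apply, mf_apply, h, chi_eq_one h0 (fun r hr hrd => ⟨h1 r hr hrd, by rintro rfl; exact hd hrd⟩)]
          simp
      rw [Finset.sum_congr rfl e, ← Finset.sum_filter, Finset.sum_const, nsmul_eq_mul, mul_comm]
      congr 3
      ext q
      rw [Finset.mem_filter, hS, Finset.mem_filter, Finset.mem_Ioc, Nat.mem_primeFactors]
      constructor
      · rintro ⟨a, b, c⟩
        exact ⟨⟨⟨a.pos, (Nat.le_of_dvd hm.1 b).trans hm.2⟩, a, h1 q a b⟩, b⟩
      · rintro ⟨⟨_, a, _⟩, b⟩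
        exact ⟨a, b, h0⟩
  have h1 : ∑ m ∈ Ioc 0 N, mf P m * (1 + (m.primeFactors.card : ℝ)) = 
      MS P N + ∑ q ∈ S, (MS P N - ∑ d ∈ Ioc 0 N, chi (fun r => r = q) d * MS P (N / d)) := by
    simp_rw [mul_add, mul_one]
    rw [Finset.sum_add_distrib, Finset.sum_congr rfl hω, Finset.sum_comm]
    congr 1
    apply Finset.sum_congr rfl
    intro q hq
    rw [hS, Finset.mem_filter] at hq
    rw [Finset.sum_sub_distrib, ← MS_conv P (fun r => r = q) (by rintro r rfl; exact hq.2.2)]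
    rfl
  rcases Nat.eq_zero_or_pos N with h0 | hN
  · subst h0; simp
  have hins : Ioc 0 N = insert 1 (Ioc 1 N) := by
    ext n; simp only [Finset.mem_Ioc, Finset.mem_insert]; omega
  have h2 : ∑ q ∈ S, (MS P N - ∑ d ∈ Ioc 0 N, chi (fun r => r = q) d * MS P (N / d)) = 
      - ∑ d ∈ Ioc 1 N, (∑ q ∈ S, chi (fun r => r = q) d) * MS P (N / d) := by
    rw [← Finset.sum_neg_distrib]
    simp_rw [Finset.sum_mul]
    simp_rw [← Finset.sum_neg_distrib]
    rw [Finset.sum_comm]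
    apply Finset.sum_congr rfl
    intro q _
    rw [hins, Finset.sum_insert (by simp), chi_one]
    simp
  have h3 : ∀ d ∈ Ioc 1 N, |∑ q ∈ S, chi (fun r => r = q) d| ≤ pp d := by
    intro d hd
    rw [Finset.mem_Ioc] at hd
    rw [abs_of_nonneg (Finset.sum_nonneg fun q _ => chi_nonneg _ _)]
    have hmp : d.minFac.Prime := Nat.minFac_prime (by omega)
    have hz : ∀ q, q ≠ d.minFac → chi (fun r => r = q) d = 0 := by
      intro q hq
      exact chi_eq_zero hmp (Nat.minFac_dvd d) (fun h => hq h.symm)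
    calc ∑ q ∈ S, chi (fun r => r = q) d ≤ chi (fun r => r = d.minFac) d := by
          by_cases hmem : d.minFac ∈ S
          · rw [Finset.sum_eq_single_of_mem _ hmem (fun q _ hq => hz q hq)]
          · rw [Finset.sum_eq_zero]
            · exact chi_nonneg _ _
            · intro q hq
              exact hz q (by rintro rfl; exact hmem hq)
      _ ≤ pp d := by
          rcases chi_cases (fun r => r = d.minFac) d with h | ⟨h, hd0, hr⟩
          · rw [h]; exact pp_nonneg d
          · rw [h]
            have hpow : IsPrimePow d := by
              have := Nat.eq_prime_pow_of_unique_prime_dvd hd0 (fun {r} a b => hr r a b)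
              rw [isPrimePow_nat_iff]
              refine ⟨d.minFac, d.primeFactorsList.length, hmp, ?_, this.symm⟩
              by_contra h0
              have h00 : d.primeFactorsList.length = 0 := by omega
              rw [h00] at this; simp at this; omega
            unfold pp; rw [if_pos (Or.inr hpow)]
  rw [h1, h2]
  rw [hins, Finset.sum_insert (by simp)]
  have : pp 1 = 1 := by unfold pp; simp
  rw [this, one_mul, Nat.div_one]
  calc _ ≤ |MS P N| + |- ∑ d ∈ Ioc 1 N, (∑ q ∈ S, chi (fun r => r = q) d) * MS P (N / d)| := abs_add_le _ _
    _ ≤ _ := by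
      rw [abs_neg]
      gcongr
      refine (Finset.abs_sum_le_sum_abs _ _).trans (Finset.sum_le_sum fun d hd => ?_)
      rw [abs_mul]
      gcongr
      exact h3 d hd

end MOB

open Finset ArithmeticFunction Real

namespace MOB

lemma pp_sum : ∃ C > 0, ∀ y : ℝ, 1 ≤ y → ∑ n ∈ Ioc 0 ⌊y⌋₊, pp n ≤ C * (y / (1 + Real.log y)) := by
  obtain ⟨D, hD, HD⟩ := log_pow_le 2 (ε := 1/2) (by norm_num)
  refine ⟨9 + 4 * D + 2, by positivity, fun y hy => ?_⟩
  have hly := Real.log_nonneg hy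
  have hl2 := Real.log_two_gt_d9
  have hl2' := Real.log_two_lt_d9
  have hY : 0 ≤ y / (1 + Real.log y) := by positivity
  rcases lt_or_ge y 2 with h2 | h2
  · have hf : ⌊y⌋₊ = 1 := by
      rw [Nat.floor_eq_iff (by linarith)]; constructor <;> push_cast <;> linarith
    rw [hf]
    have : ∑ n ∈ Ioc 0 1, pp n = 1 := by
      rw [show Ioc 0 1 = {1} from rfl, Finset.sum_singleton]; unfold pp; simp
    rw [this]
    have h3 : Real.log y ≤ y - 1 := Real.log_le_sub_one_of_pos (by linarith)
    have h4 : 1 ≤ y / (1 + Real.log y) := by rw [one_le_div (by positivity)]; linarith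
    nlinarith
  have hl2y : Real.log 2 ≤ Real.log y := Real.log_le_log (by norm_num) h2
  have h1 : ∑ n ∈ Ioc 0 ⌊y⌋₊, pp n ≤ 1 + ∑ n ∈ Ioc 0 ⌊y⌋₊ with IsPrimePow n, (1:ℝ) := by
    rw [Finset.sum_filter]
    have h11 : ∑ n ∈ Ioc 0 ⌊y⌋₊, (if n = 1 then (1:ℝ) else 0) ≤ 1 := by
      rw [Finset.sum_ite_eq']; split_ifs <;> norm_num
    calc ∑ n ∈ Ioc 0 ⌊y⌋₊, pp n ≤ ∑ n ∈ Ioc 0 ⌊y⌋₊, ((if n = 1 then (1:ℝ) else 0) + (if IsPrimePow n then 1 else 0)) := by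
          apply Finset.sum_le_sum
          intro n _
          unfold pp
          by_cases ha : n = 1 <;> by_cases hb : IsPrimePow n
          · rw [if_pos (Or.inl ha), if_pos ha, if_pos hb]; norm_num
          · rw [if_pos (Or.inl ha), if_pos ha, if_neg hb]; norm_num
          · rw [if_pos (Or.inr hb), if_neg ha, if_pos hb]; norm_num
          · rw [if_neg (not_or.mpr ⟨ha, hb⟩), if_neg ha, if_neg hb]; norm_num
      _ ≤ _ := by rw [Finset.sum_add_distrib]; linarith
  rw [Chebyshev.sum_PrimePow_eq_sum_sum _ (by linarith)] at h1
  set K := ⌊Real.log y / Real.log 2⌋₊ with hK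
  have hK1 : 1 ≤ K := by
    apply Nat.le_floor
    rw [le_div_iff₀ (by linarith)]; push_cast; linarith
  have hKle : (K:ℝ) ≤ 2 * Real.log y := by
    have : (K:ℝ) ≤ Real.log y / Real.log 2 := Nat.floor_le (by positivity)
    refine this.trans ?_
    rw [div_le_iff₀ (by linarith)]; nlinarith
  have hIcc : Icc 1 K = insert 1 (Icc 2 K) := by
    ext n; simp only [Finset.mem_Icc, Finset.mem_insert]; omega
  rw [hIcc, Finset.sum_insert (by simp)] at h1
  have h2' : ∑ p ∈ Ioc 0 ⌊y ^ (1 / ((1:ℕ):ℝ))⌋₊ with Nat.Prime p, (1:ℝ) = (Nat.primeCounting ⌊y⌋₊ : ℝ) := by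
    simp only [Nat.cast_one, div_one, Real.rpow_one]
    rw [← Nat.primesLE_card_eq_primeCounting, Finset.sum_const, nsmul_eq_mul, mul_one]
    congr 2
    ext p
    rw [Nat.mem_primesLE, Finset.mem_filter, Finset.mem_Ioc]
    constructor
    · rintro ⟨⟨_, a⟩, b⟩; exact ⟨a, b⟩
    · rintro ⟨a, b⟩; exact ⟨⟨b.pos, a⟩, b⟩
  have h3 : ∑ k ∈ Icc 2 K, ∑ p ∈ Ioc 0 ⌊y ^ (1 / (k:ℝ))⌋₊ with Nat.Prime p, (1:ℝ) ≤ 2 * Real.log y * √y := by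
    calc _ ≤ ∑ k ∈ Icc 2 K, √y := by
          apply Finset.sum_le_sum
          intro k hk
          rw [Finset.mem_Icc] at hk
          rw [Finset.sum_const, nsmul_eq_mul, mul_one]
          calc _ ≤ ((Ioc 0 ⌊y ^ (1 / (k:ℝ))⌋₊).card : ℝ) := by
                exact_mod_cast Finset.card_filter_le _ _
            _ = (⌊y ^ (1 / (k:ℝ))⌋₊ : ℝ) := by simp
            _ ≤ y ^ (1 / (k:ℝ)) := Nat.floor_le (by positivity)
            _ ≤ y ^ (1/2:ℝ) := by
                apply Real.rpow_le_rpow_of_exponent_le hy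
                have : (2:ℝ) ≤ k := by exact_mod_cast hk.1
                gcongr
            _ = √y := (Real.sqrt_eq_rpow y).symm
      _ = ((K - 1 : ℕ) : ℝ) * √y := by
          rw [Finset.sum_const, nsmul_eq_mul, Nat.card_Icc]; congr 2
      _ ≤ 2 * Real.log y * √y := by
          gcongr
          refine le_trans ?_ hKle
          exact_mod_cast Nat.sub_le K 1
  rw [h2'] at h1
  have h4 := Chebyshev.pi_le_log4_mul_div (x := y) (by linarith)
  have hsq : 1 ≤ √y := Real.one_le_sqrt.mpr hy
  have h5 : Real.log 4 * y / Real.log √y ≤ 9 * (y / (1 + Real.log y)) := by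
    have e4 : Real.log 4 = 2 * Real.log 2 := by
      rw [show (4:ℝ) = 2^2 by norm_num, Real.log_pow]; norm_num
    rw [Real.log_sqrt (by linarith), e4, mul_div_assoc', div_le_div_iff₀ (by linarith) (by linarith)]
    have : 2 * Real.log 2 * (1 + Real.log y) ≤ 9 * (Real.log y / 2) := by nlinarith
    calc 2 * Real.log 2 * y * (1 + Real.log y) = y * (2 * Real.log 2 * (1 + Real.log y)) := by ring
      _ ≤ y * (9 * (Real.log y / 2)) := by gcongr
      _ = _ := by ring
  have h6 : √y * (1 + Real.log y) ≤ D * (y / (1 + Real.log y)) := by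
    have := HD y hy
    rw [← Real.sqrt_eq_rpow] at this
    rw [mul_div_assoc', le_div_iff₀ (by linarith)]
    calc √y * (1 + Real.log y) * (1 + Real.log y) = √y * (1 + Real.log y)^2 := by ring
      _ ≤ √y * (D * √y) := by gcongr
      _ = D * (√y * √y) := by ring
      _ = D * y := by rw [Real.mul_self_sqrt (by linarith)]
  have h7 : 1 + √y + 2 * Real.log y * √y ≤ 4 * (√y * (1 + Real.log y)) := by
    have : 0 ≤ Real.log y * √y := by positivity
    nlinarith
  nlinarith

/-- power function as monoid hom -/
noncomputable def powHom (s : ℝ) (hs : s ≠ 0) : ℕ →* ℝ where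
  toFun n := (n:ℝ) ^ (-s)
  map_one' := by simp
  map_mul' a b := by push_cast; rw [Real.mul_rpow (by positivity) (by positivity)]

lemma smooth_hasSum {s : ℝ} (hs : 0 < s) (p : ℕ) :
    HasSum (fun m : ℕ => chi (fun q => q ≤ p) m * (m:ℝ) ^ (-s)) (∏ q ∈ (p+1).primesBelow, (1 - (q:ℝ) ^ (-s))⁻¹) := by
  have h := (EulerProduct.summable_and_hasSum_smoothNumbers_prod_primesBelow_geometric (f := powHom s hs.ne') (by
    intro q hq
    change ‖(q:ℝ) ^ (-s)‖ < 1
    rw [Real.norm_of_nonneg (by positivity)]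
    apply Real.rpow_lt_one_of_one_lt_of_neg
    · exact_mod_cast hq.one_lt
    · linarith) (p+1)).2
  rw [show (fun m : (p+1).smoothNumbers => powHom s hs.ne' (m:ℕ)) = (fun m : ℕ => (m:ℝ) ^ (-s)) ∘ Subtype.val from rfl,
    hasSum_subtype_iff_indicator] at h
  have hfun : (fun m : ℕ => chi (fun q => q ≤ p) m * (m:ℝ) ^ (-s)) = Set.indicator ((p+1).smoothNumbers) (fun m : ℕ => (m:ℝ) ^ (-s)) := by
   funext m
   rcases chi_cases (fun q => q ≤ p) m with h0 | ⟨h1, h2, h3⟩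
   · rw [h0, zero_mul, Set.indicator_of_notMem]
     intro hm
     rw [Nat.mem_smoothNumbers] at hm
     have := chi_eq_one (P := fun q => q ≤ p) hm.1 (fun q hq hd => by
       have := hm.2 q ((Nat.mem_primeFactorsList hm.1).mpr ⟨hq, hd⟩); omega)
     rw [this] at h0; norm_num at h0
   · rw [h1, one_mul, Set.indicator_of_mem]
     rw [Nat.mem_smoothNumbers']
     intro q hq hd
     have := h3 q hq hd
     omega
  rw [hfun]
  exact h

lemma zeta_real_sum {η : ℝ} (hη : 0 < η) (h3 : η ≤ 3) : ∑' n : ℕ, (n:ℝ) ^ (-(1+η)) ≤ 7 / η := by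
  have h := zeta_real_upper hη h3
  rw [zeta_eq_tsum_one_div_nat_cpow (by simp; linarith)] at h
  have e : ∀ n : ℕ, 1 / (n:ℂ) ^ (1 + (η:ℂ)) = (((n:ℝ) ^ (-(1+η)) : ℝ) : ℂ) := by
    intro n
    rw [Complex.ofReal_cpow (by positivity)]
    push_cast
    rw [Complex.cpow_neg, one_div]
  simp_rw [e] at h
  rw [← Complex.ofReal_tsum, Complex.norm_real] at h
  exact (le_abs_self _).trans h

lemma log3p (p : ℕ) (hp : 1 ≤ p) : 1 ≤ Real.log (3 * p) := by
  have : (1:ℝ) ≤ p := by exact_mod_cast hp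
  rw [Real.le_log_iff_exp_le (by positivity)]
  linarith [Real.exp_one_lt_d9]

lemma prime_recip (p : ℕ) (hp : 1 ≤ p) : ∑ q ∈ (p+1).primesBelow, (1:ℝ) / q ≤ 3 * Real.log (7 * Real.log (3 * p)) := by
  have hl := log3p p hp
  set l := Real.log (3 * p) with hldef
  set η := 1 / l with hη
  have hη0 : 0 < η := by positivity
  have hη1 : η ≤ 1 := by rw [hη, div_le_one] <;> linarith
  have hs := smooth_hasSum (s := 1 + η) (by linarith) p
  have hle : ∏ q ∈ (p+1).primesBelow, (1 - (q:ℝ) ^ (-(1+η)))⁻¹ ≤ 7 / η := by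
    refine le_trans ?_ (zeta_real_sum hη0 (by linarith))
    rw [← hs.tsum_eq]
    have hsum : Summable (fun n : ℕ => (n:ℝ) ^ (-(1+η))) := Real.summable_nat_rpow.mpr (by linarith)
    apply hs.summable.tsum_le_tsum _ hsum
    intro m
    have := chi_le_one (fun q => q ≤ p) m
    have h2 : 0 ≤ (m:ℝ) ^ (-(1+η)) := by positivity
    nlinarith
  have hq1 : ∀ q ∈ (p+1).primesBelow, 0 < 1 - (q:ℝ) ^ (-(1+η)) := by
    intro q hq
    rw [Nat.mem_primesBelow] at hq
    have : (q:ℝ) ^ (-(1+η)) < 1 := by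
      apply Real.rpow_lt_one_of_one_lt_of_neg
      · exact_mod_cast hq.2.one_lt
      · linarith
    linarith
  have h7 : 7 / η = 7 * l := by rw [hη]; field_simp
  have h1 : ∑ q ∈ (p+1).primesBelow, (q:ℝ) ^ (-(1+η)) ≤ Real.log (7 * l) := by
    rw [Real.le_log_iff_exp_le (by positivity), Real.exp_sum, ← h7]
    refine le_trans ?_ hle
    apply Finset.prod_le_prod
    · intro q _; exact (Real.exp_pos _).le
    · intro q hq
      have := hq1 q hq
      rw [le_inv_comm₀ (Real.exp_pos _) this, ← Real.exp_neg]
      have := Real.add_one_le_exp (-(q:ℝ) ^ (-(1+η)))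
      linarith
  have h2 : ∀ q ∈ (p+1).primesBelow, (1:ℝ)/q ≤ 3 * (q:ℝ) ^ (-(1+η)) := by
    intro q hq
    rw [Nat.mem_primesBelow] at hq
    have hq0 : (0:ℝ) < q := by exact_mod_cast hq.2.pos
    have hqp : (q:ℝ) ≤ 3 * p := by
      have : (q:ℝ) ≤ p := by exact_mod_cast (by omega : q ≤ p)
      linarith
    rw [neg_add, Real.rpow_add hq0, Real.rpow_neg_one, one_div]
    have : 1 ≤ 3 * (q:ℝ) ^ (-η) := by
      have h3 : (q:ℝ) ^ η ≤ 3 := by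
        rw [Real.rpow_def_of_pos hq0]
        have : Real.log q * η ≤ 1 := by
          rw [hη, mul_one_div, div_le_one (by linarith)]
          exact Real.log_le_log hq0 hqp
        have := Real.exp_le_exp.mpr this
        linarith [Real.exp_one_lt_d9]
      rw [Real.rpow_neg hq0.le]
      have : 0 < (q:ℝ) ^ η := by positivity
      rw [← div_eq_mul_inv, one_le_div this]; exact h3
    have h4 : 0 < (q:ℝ)⁻¹ := by positivity
    nlinarith
  calc _ ≤ ∑ q ∈ (p+1).primesBelow, 3 * (q:ℝ) ^ (-(1+η)) := Finset.sum_le_sum h2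
    _ = 3 * ∑ q ∈ (p+1).primesBelow, (q:ℝ) ^ (-(1+η)) := by rw [Finset.mul_sum]
    _ ≤ _ := by linarith

lemma rankin (p : ℕ) (hp : 1 ≤ p) (N : ℕ) :
    ∑ d ∈ Ioc 0 N, chi (fun q => q ≤ p) d * (d:ℝ) ^ (-(1 - 1 / (2 * Real.log (3 * p)))) ≤ (7 * Real.log (3 * p)) ^ 30 := by
  have hl := log3p p hp
  set l := Real.log (3 * p) with hldef
  set ε := 1 / (2 * l) with hε
  have hε0 : 0 < ε := by positivity
  have hε1 : ε ≤ 1/2 := by rw [hε]; gcongr; linarith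
  have hs := smooth_hasSum (s := 1 - ε) (by linarith) p
  refine (sum_le_hasSum _ (fun i _ => mul_nonneg (chi_nonneg _ _) (by positivity)) hs).trans ?_
  have h1 : ∏ q ∈ (p+1).primesBelow, (1 - (q:ℝ) ^ (-(1-ε)))⁻¹ ≤ ∏ q ∈ (p+1).primesBelow, Real.exp (10 * (1 / q)) := by
    have key : ∀ q ∈ (p+1).primesBelow, (q:ℝ) ^ (-(1-ε)) ≤ 1.6488 * (1/q) ∧ (2:ℝ) ≤ q := by
      intro q hq
      rw [Nat.mem_primesBelow] at hq
      have hq0 : (0:ℝ) < q := by exact_mod_cast hq.2.pos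
      have hqp : (q:ℝ) ≤ 3 * p := by
        have : (q:ℝ) ≤ p := by exact_mod_cast (by omega : q ≤ p)
        linarith
      refine ⟨?_, by exact_mod_cast hq.2.two_le⟩
      rw [neg_sub, sub_eq_add_neg, Real.rpow_add hq0, Real.rpow_neg_one, ← one_div]
      gcongr
      rw [Real.rpow_def_of_pos hq0]
      have : Real.log q * ε ≤ 1/2 := by
        rw [hε, mul_one_div, div_le_div_iff₀ (by linarith) (by norm_num)]
        have := Real.log_le_log hq0 hqp
        linarith
      have h2 := Real.exp_le_exp.mpr this
      have h3 : Real.exp (1/2) ≤ 1.6488 := by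
        have : Real.exp (1/2) ^ 2 = Real.exp 1 := by rw [← Real.exp_nat_mul]; norm_num
        have h5 := Real.exp_one_lt_d9
        by_contra hc
        push Not at hc
        nlinarith
      linarith
    apply Finset.prod_le_prod
    · intro q hq
      obtain ⟨a, b⟩ := key q hq
      have : (1:ℝ)/q ≤ 1/2 := by gcongr
      apply inv_nonneg.mpr; linarith
    · intro q hq
      obtain ⟨a, b⟩ := key q hq
      have hb : (1:ℝ)/q ≤ 1/2 := by gcongr
      have hb0 : 0 < (1:ℝ)/q := by positivity
      set v := (q:ℝ) ^ (-(1-ε))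
      have hv0 : 0 ≤ v := by positivity
      have hv1 : v ≤ 0.8244 := by linarith
      have hp1 : 0 < 1 - v := by linarith
      have h2 : v / (1 - v) ≤ 10 * (1/q) := by
        rw [div_le_iff₀ hp1]; nlinarith
      have h3 : (1 - v)⁻¹ = v / (1 - v) + 1 := by field_simp; ring
      rw [h3]
      exact (Real.add_one_le_exp _).trans (Real.exp_le_exp.mpr h2)
  refine h1.trans ?_
  rw [← Real.exp_sum, ← Finset.mul_sum]
  have h2 := prime_recip p hp
  rw [← hldef] at h2
  calc _ ≤ Real.exp (30 * Real.log (7 * l)) := by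
        apply Real.exp_le_exp.mpr; linarith
    _ = _ := by
      rw [show (30:ℝ) = ((30:ℕ):ℝ) by norm_num, Real.exp_nat_mul, Real.exp_log (by positivity)]

lemma MS_true (N : ℕ) : MS (fun _ => True) N = ∑ n ∈ Icc 1 N, (moebius n : ℝ) := by
  unfold MS
  apply Finset.sum_congr rfl
  intro n hn
  have hn' : n ≠ 0 := by rw [Finset.mem_Ioc] at hn; omega
  rw [mf_apply, chi_eq_one hn' (fun _ _ _ => trivial), mul_one]

lemma MS_bound (A : ℕ) : ∃ C > 0, ∀ p t : ℕ, 1 ≤ p → 1 ≤ t →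
    |MS (fun q => p < q) t| ≤ C * (t * (Real.log (3 * p)) ^ 30 *
      (((1 + Real.log t) ^ A)⁻¹ + Real.exp (- (Real.log t / (4 * Real.log (3 * p)))))) := by
  obtain ⟨C, hC, H⟩ := mertens A
  refine ⟨7 ^ 30 * (C * 2 ^ A + 1), by positivity, fun p t hp ht => ?_⟩
  have hl := log3p p hp
  have hr := rankin p hp t
  set l := Real.log (3 * p) with hldef
  set ε := 1 / (2 * l) with hε
  have hε0 : 0 < ε := by positivity
  have ht1 : (1:ℝ) ≤ t := by exact_mod_cast ht
  have hlt := Real.log_nonneg ht1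
  set E := ((1 + Real.log t) ^ A)⁻¹ + Real.exp (- (Real.log t / (4 * l))) with hE
  have hE0 : 0 ≤ E := by positivity
  have key : ∀ d ∈ Ioc 0 t, |MS (fun _ => True) (t / d)| ≤ (d:ℝ) ^ (-(1 - ε)) * (t * (C * 2 ^ A + 1) * E) := by
    intro d hd
    rw [Finset.mem_Ioc] at hd
    have hd1 : (1:ℝ) ≤ d := by exact_mod_cast hd.1
    have hd0 : (0:ℝ) < d := by linarith
    have hdt : (d:ℝ) ≤ t := by exact_mod_cast hd.2
    have hy : 1 ≤ (t:ℝ) / d := by rw [one_le_div hd0]; exact hdt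
    rw [MS_true, ← Nat.floor_div_eq_div (K := ℝ)]
    have hdε : (d:ℝ)⁻¹ ≤ (d:ℝ) ^ (-(1 - ε)) := by
      rw [← Real.rpow_neg_one]
      apply Real.rpow_le_rpow_of_exponent_le hd1; linarith
    have hpos : 0 < (d:ℝ) ^ (-(1 - ε)) := by positivity
    rcases le_or_gt ((d:ℝ)^2) t with hs | hs
    · have h1 := H _ hy
      have h2 : (1 + Real.log t) / 2 ≤ 1 + Real.log (t / d) := by
        rw [Real.log_div (by linarith) (by linarith)]
        have := Real.log_le_log (by positivity) hs
        rw [Real.log_pow] at this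
        push_cast at this
        linarith
      calc _ ≤ C * (t / d / (1 + Real.log (t / d)) ^ A) := h1
        _ ≤ C * (t / d / ((1 + Real.log t)/2) ^ A) := by gcongr
        _ = (d:ℝ)⁻¹ * (t * (C * 2 ^ A) * ((1 + Real.log t) ^ A)⁻¹) := by
            rw [div_pow]; field_simp
        _ ≤ (d:ℝ) ^ (-(1 - ε)) * (t * (C * 2 ^ A + 1) * E) := by
            gcongr
            · linarith
            · rw [hE]; linarith [Real.exp_pos (- (Real.log t / (4 * l)))]
    · have h1 : |∑ n ∈ Icc 1 ⌊(t:ℝ)/d⌋₊, (moebius n : ℝ)| ≤ t / d := by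
        calc _ ≤ ∑ n ∈ Icc 1 ⌊(t:ℝ)/d⌋₊, |(moebius n : ℝ)| := Finset.abs_sum_le_sum_abs _ _
          _ ≤ ∑ n ∈ Icc 1 ⌊(t:ℝ)/d⌋₊, (1:ℝ) := Finset.sum_le_sum (fun n _ => mu_abs_le n)
          _ = (⌊(t:ℝ)/d⌋₊ : ℝ) := by simp
          _ ≤ _ := Nat.floor_le (by positivity)
      have h2 : (d:ℝ) ^ (-ε) ≤ Real.exp (- (Real.log t / (4 * l))) := by
        rw [Real.rpow_def_of_pos hd0]
        apply Real.exp_le_exp.mpr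
        have := Real.log_le_log (by linarith) hs.le
        rw [Real.log_pow] at this
        push_cast at this
        have h3 : Real.log t / (4 * l) = Real.log t * ε / 2 := by rw [hε]; field_simp; norm_num
        rw [h3]; nlinarith
      have h3 : (d:ℝ)⁻¹ = (d:ℝ) ^ (-(1 - ε)) * (d:ℝ) ^ (-ε) := by
        rw [← Real.rpow_add hd0, ← Real.rpow_neg_one]; congr 1; ring
      calc _ ≤ (t:ℝ) / d := h1
        _ = (d:ℝ) ^ (-(1 - ε)) * (t * 1 * (d:ℝ) ^ (-ε)) := by rw [div_eq_mul_inv, h3]; ring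
        _ ≤ (d:ℝ) ^ (-(1 - ε)) * (t * (C * 2 ^ A + 1) * E) := by
            gcongr
            · have : 0 < C * 2 ^ A := by positivity
              linarith
            · rw [hE]
              have : 0 ≤ ((1 + Real.log t) ^ A)⁻¹ := by positivity
              linarith
  rw [MS_rough]
  calc _ ≤ ∑ d ∈ Ioc 0 t, |chi (fun q => q ≤ p) d * MS (fun _ => True) (t / d)| := Finset.abs_sum_le_sum_abs _ _
    _ ≤ ∑ d ∈ Ioc 0 t, chi (fun q => q ≤ p) d * (d:ℝ) ^ (-(1 - ε)) * (t * (C * 2 ^ A + 1) * E) := by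
        apply Finset.sum_le_sum
        intro d hd
        rw [abs_mul, abs_of_nonneg (chi_nonneg _ _), mul_assoc]
        exact mul_le_mul_of_nonneg_left (key d hd) (chi_nonneg _ _)
    _ ≤ (7 * l) ^ 30 * (t * (C * 2 ^ A + 1) * E) := by
        rw [← Finset.sum_mul]
        gcongr
    _ = _ := by rw [mul_pow]; ring

/-- The form used: for `t ≥ T(p)`. -/
lemma MS_large : ∃ C > 0, ∀ (p t : ℕ) (L : ℝ), 1 ≤ p → 1 ≤ t → Real.exp 1 ≤ L → Real.log t ≤ L →
    136 * Real.log L * Real.log (3 * p) ≤ Real.log t →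
    |MS (fun q => p < q) t| ≤ C * (t * (((1 + Real.log t) ^ 3)⁻¹ + (L ^ 4)⁻¹)) := by
  obtain ⟨C, hC, H⟩ := MS_bound 33
  refine ⟨C, hC, fun p t L hp ht hL htL hT => ?_⟩
  refine (H p t hp ht).trans ?_
  have hl := log3p p hp
  set l := Real.log (3 * p) with hldef
  have hL0 : 0 < L := (Real.exp_pos 1).trans_le hL
  have hll : 1 ≤ Real.log L := by rwa [Real.le_log_iff_exp_le hL0]
  have ht1 : (1:ℝ) ≤ t := by exact_mod_cast ht
  have hlt := Real.log_nonneg ht1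
  have hllt : l ≤ Real.log t := by nlinarith
  have h1 : l ^ 30 * ((1 + Real.log t) ^ 33)⁻¹ ≤ ((1 + Real.log t) ^ 3)⁻¹ := by
    rw [show (33:ℕ) = 30 + 3 from rfl, pow_add, mul_inv, ← mul_assoc]
    have : l ^ 30 * ((1 + Real.log t) ^ 30)⁻¹ ≤ 1 := by
      rw [← div_eq_mul_inv, div_le_one (by positivity)]; gcongr; linarith
    have h2 : 0 ≤ ((1 + Real.log t) ^ 3)⁻¹ := by positivity
    nlinarith
  have h2 : l ^ 30 * Real.exp (- (Real.log t / (4 * l))) ≤ (L ^ 4)⁻¹ := by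
    have h3 : Real.exp (- (Real.log t / (4 * l))) ≤ (L ^ 34)⁻¹ := by
      rw [← Real.exp_log (by positivity : 0 < (L^34)⁻¹), Real.log_inv, Real.log_pow]
      apply Real.exp_le_exp.mpr
      have : 34 * Real.log L ≤ Real.log t / (4 * l) := by
        rw [le_div_iff₀ (by linarith)]; linarith
      push_cast; linarith
    calc _ ≤ L ^ 30 * (L^34)⁻¹ := by gcongr; linarith
      _ = _ := by rw [show (34:ℕ) = 30 + 4 from rfl, pow_add]; field_simp
  rw [mul_assoc (t:ℝ)]
  gcongr C * (t * ?_)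
  rw [mul_add]; linarith

end MOB

open Finset ArithmeticFunction Real

namespace MOB

lemma harm (n : ℕ) : ∑ i ∈ Ioc 0 n, (1:ℝ) / i = (harmonic n : ℝ) := by
  rw [harmonic_eq_sum_Icc]
  push_cast
  apply Finset.sum_congr
  · rfl
  · intro i _; rw [one_div]

lemma rough_recip (p z : ℕ) (hp : 1 ≤ p) (hz : 1 ≤ z) :
    Real.log (p + 1) * ∑ m ∈ Ioc 0 z, chi (fun q => p < q) m / m ≤ 1 + (Real.log p + Real.log z) := by
  classical
  set A := (Ioc 0 z).filter (fun m => ∀ q, q.Prime → q ∣ m → p < q) with hA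
  have h1 : ∑ m ∈ Ioc 0 z, chi (fun q => p < q) m / m = ∑ m ∈ A, (1:ℝ) / m := by
    rw [hA, Finset.sum_filter]
    apply Finset.sum_congr rfl
    intro m hm
    rw [Finset.mem_Ioc] at hm
    split_ifs with h
    · rw [chi_eq_one (by omega) h]
    · rcases chi_cases (fun q => p < q) m with h0 | ⟨_, _, h3⟩
      · rw [h0, zero_div]
      · exact absurd h3 h
  have hsum0 : 0 ≤ ∑ m ∈ A, (1:ℝ) / m := Finset.sum_nonneg fun m _ => by positivity
  have h2 : Real.log (p+1) ≤ ∑ d ∈ Ioc 0 p, (1:ℝ)/d := by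
    rw [harm]; exact_mod_cast log_add_one_le_harmonic p
  have hinj : Set.InjOn (fun a : ℕ × ℕ => a.1 * a.2) ((Ioc 0 p ×ˢ A : Finset (ℕ × ℕ)) : Set (ℕ × ℕ)) := by
    have key : ∀ d m d' m' : ℕ, 0 < d → d ≤ p → (∀ q, q.Prime → q ∣ m' → p < q) → d * m = d' * m' → d ∣ d' := by
      intro d m d' m' hd hdp hm' e
      have hc : Nat.Coprime d m' := by
        rw [Nat.coprime_iff_gcd_eq_one]
        by_contra hg
        obtain ⟨q, hq, hqd⟩ := Nat.exists_prime_and_dvd hg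
        have := hm' q hq (hqd.trans (Nat.gcd_dvd_right _ _))
        have := Nat.le_of_dvd hd (hqd.trans (Nat.gcd_dvd_left _ _))
        omega
      exact hc.dvd_of_dvd_mul_right (e ▸ dvd_mul_right d m)
    rintro ⟨d, m⟩ h ⟨d', m'⟩ h' e
    simp only [hA, Finset.coe_product, Set.mem_prod, Finset.mem_coe, Finset.mem_Ioc, Finset.mem_filter] at h h' e
    have e1 : d = d' := Nat.dvd_antisymm (key d m d' m' h.1.1 h.1.2 h'.2.2 e) (key d' m' d m h'.1.1 h'.1.2 h.2.2 e.symm)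
    subst e1
    have := Nat.eq_of_mul_eq_mul_left h.1.1 e
    rw [this]
  rw [h1]
  calc Real.log (p+1) * ∑ m ∈ A, (1:ℝ) / m ≤ (∑ d ∈ Ioc 0 p, (1:ℝ)/d) * ∑ m ∈ A, (1:ℝ) / m := by gcongr
    _ = ∑ a ∈ Ioc 0 p ×ˢ A, (1:ℝ) / ((a.1 * a.2 : ℕ) : ℝ) := by
        rw [Finset.sum_mul_sum, Finset.sum_product]
        apply Finset.sum_congr rfl; intro d _
        apply Finset.sum_congr rfl; intro m _
        push_cast
        rw [div_mul_div_comm, one_mul]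
    _ = ∑ n ∈ (Ioc 0 p ×ˢ A).image (fun a : ℕ × ℕ => a.1 * a.2), (1:ℝ) / (n:ℝ) := by
        rw [Finset.sum_image hinj]
    _ ≤ ∑ n ∈ Ioc 0 (p * z), (1:ℝ) / n := by
        apply Finset.sum_le_sum_of_subset_of_nonneg
        · intro n hn
          rw [Finset.mem_image] at hn
          obtain ⟨⟨d, m⟩, h, rfl⟩ := hn
          simp only [hA, Finset.mem_product, Finset.mem_Ioc, Finset.mem_filter] at h ⊢
          exact ⟨Nat.mul_pos h.1.1 h.2.1.1, Nat.mul_le_mul h.1.2 h.2.1.2⟩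
        · intros; positivity
    _ ≤ 1 + Real.log ((p * z : ℕ) : ℝ) := by rw [harm]; exact harmonic_le_one_add_log _
    _ = _ := by
        push_cast
        rw [Real.log_mul (by positivity) (by positivity)]

lemma harm_le (n : ℕ) : ∑ i ∈ Ioc 0 n, (1:ℝ) / i ≤ 1 + Real.log n := by
  rw [harm]; exact harmonic_le_one_add_log _

lemma bertrand_sum (n : ℕ) (hn : 1 ≤ n) :
    ∑ k ∈ Ioc 0 n, (1:ℝ) / (k * (1 + Real.log k) ^ 2) ≤ 2 - 1 / (1 + Real.log n) := by
  induction n, hn using Nat.le_induction with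
  | base => norm_num
  | succ n hn ih =>
    rw [Finset.sum_Ioc_succ_top (by omega)]
    have hn1 : (1:ℝ) ≤ n := by exact_mod_cast hn
    push_cast
    have ha : 0 ≤ Real.log n := Real.log_nonneg hn1
    have hb : Real.log n ≤ Real.log (n+1) := Real.log_le_log (by linarith) (by linarith)
    have hd : 1 / ((n:ℝ)+1) ≤ Real.log (n+1) - Real.log n := by
      have := Real.log_le_sub_one_of_pos (x := (n:ℝ)/(n+1)) (by positivity)
      rw [Real.log_div (by positivity) (by positivity)] at this
      have e : (n:ℝ)/(n+1) - 1 = -(1 / ((n:ℝ)+1)) := by field_simp; ring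
      linarith
    set a := Real.log n
    set b := Real.log (n+1)
    have h3 : (1:ℝ) / ((n+1) * (1 + b)^2) ≤ 1 / (1 + a) - 1 / (1 + b) := by
      rw [div_sub_div _ _ (by positivity) (by linarith)]
      calc (1:ℝ) / ((n+1) * (1 + b)^2) = (1 / (n+1)) / ((1+b)^2) := by rw [div_div]
        _ ≤ (b - a) / ((1+b)^2) := by gcongr
        _ ≤ (b - a) / ((1+a)*(1+b)) := by
            apply div_le_div_of_nonneg_left (by linarith) (by nlinarith)
            nlinarith
        _ = _ := by congr 1; ring
    linarith

end MOB

open Finset ArithmeticFunction Real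

namespace MOB

lemma hyper_swap (X : ℕ) (f g : ℕ → ℝ) :
    ∑ d ∈ Ioc 0 X, f d * ∑ k ∈ Ioc 0 (X / d), g k = ∑ k ∈ Ioc 0 X, g k * ∑ d ∈ Ioc 0 (X / k), f d := by
  simp only [Finset.mul_sum]
  rw [Finset.sum_comm' (t' := Ioc 0 X) (s' := fun k => Ioc 0 (X / k))]
  · apply Finset.sum_congr rfl; intro k _
    apply Finset.sum_congr rfl; intro d _
    ring
  · intro d k
    simp only [Finset.mem_Ioc]
    constructor
    · rintro ⟨⟨h1, h2⟩, h3, h4⟩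
      rw [Nat.le_div_iff_mul_le h1] at h4
      exact ⟨⟨h1, (Nat.le_div_iff_mul_le h3).mpr (by rw [mul_comm]; exact h4)⟩, h3, (Nat.le_mul_of_pos_right k h1).trans h4⟩
    · rintro ⟨⟨h1, h2⟩, h3, h4⟩
      rw [Nat.le_div_iff_mul_le h3] at h2
      exact ⟨⟨h1, (Nat.le_mul_of_pos_right d h3).trans h2⟩, h3, (Nat.le_div_iff_mul_le h1).mpr (by rw [mul_comm]; exact h2)⟩

lemma small_p_core : ∃ C > 0, ∀ (p X : ℕ) (L : ℝ), p.Prime → 1 ≤ X → Real.exp 1 ≤ L → 1 + Real.log X ≤ 2 * L →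
    Real.log X ≤ L → 
    272 * Real.log L * Real.log (3 * p) ≤ Real.log X →
    ∑ d ∈ Ioc 0 X, pp d * |MS (fun q => p < q) (X / d)| ≤ C * (X * Real.log L / (1 + Real.log X)) := by
  classical
  obtain ⟨C, hC, HC⟩ := MS_large
  obtain ⟨D, hD, HD⟩ := pp_sum
  refine ⟨D * (822 + 6 * C), by positivity, ?_⟩
  intro p X L hp hX hL hXL hXL' hpX
  have hX1 : (1:ℝ) ≤ X := by exact_mod_cast hX
  have hlX : 0 ≤ Real.log X := Real.log_nonneg hX1
  have he : (1:ℝ) ≤ Real.exp 1 := by have := Real.add_one_le_exp 1; linarith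
  have hL1 : 1 ≤ L := he.trans hL
  have hll : 1 ≤ Real.log L := by
    rw [Real.le_log_iff_exp_le (by linarith)]; exact hL
  have hl3p := log3p p hp.one_le
  have hp2 : (2:ℝ) ≤ p := by exact_mod_cast hp.two_le
  have hlp : 0 < Real.log p := Real.log_pos (by linarith)
  set W := 136 * Real.log L * Real.log (3 * p) with hW
  have hW0 : 0 ≤ W := by positivity
  have hWX : 2 * W ≤ Real.log X := by rw [hW]; linarith
  set e1 : ℕ → ℝ := fun k => if W ≤ Real.log k then 0 else chi (fun q => p < q) k with he1
  set e2 : ℕ → ℝ := fun k => C * (((1 + Real.log k) ^ 3)⁻¹ + (L ^ 4)⁻¹) with he2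
  have he1n : ∀ k, 0 ≤ e1 k := by
    intro k; simp only [he1]; split_ifs
    · exact le_rfl
    · exact chi_nonneg _ _
  have hlog : ∀ k : ℕ, 0 ≤ Real.log k := fun k => Real.log_natCast_nonneg k
  have he2n : ∀ k, 0 ≤ e2 k := by
    intro k; simp only [he2]; have := hlog k; positivity
  have hMS : ∀ t : ℕ, 1 ≤ t → t ≤ X → |MS (fun q => p < q) t| ≤ ∑ k ∈ Ioc 0 t, (e1 k + e2 k) := by
    intro t ht htX
    have ht0 : (0:ℝ) < t := by exact_mod_cast ht
    by_cases hb : W ≤ Real.log t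
    · have h1 := HC p t L hp.one_le ht hL ((Real.log_le_log ht0 (by exact_mod_cast htX)).trans hXL') hb
      refine h1.trans ?_
      calc C * (t * (((1 + Real.log t) ^ 3)⁻¹ + (L ^ 4)⁻¹)) = ∑ k ∈ Ioc 0 t, e2 t := by
            rw [Finset.sum_const, nsmul_eq_mul, Nat.card_Ioc, Nat.sub_zero]; simp only [he2]; ring
        _ ≤ ∑ k ∈ Ioc 0 t, (e1 k + e2 k) := by
            apply Finset.sum_le_sum
            intro k hk
            rw [Finset.mem_Ioc] at hk
            have : e2 t ≤ e2 k := by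
              simp only [he2]
              have := hlog k
              have hk0 : (0:ℝ) < k := by exact_mod_cast hk.1
              have : Real.log k ≤ Real.log t := Real.log_le_log hk0 (by exact_mod_cast hk.2)
              gcongr
            have := he1n k
            linarith
    · refine (MS_abs _ t).trans ?_
      apply Finset.sum_le_sum
      intro k hk
      rw [Finset.mem_Ioc] at hk
      have hk0 : (0:ℝ) < k := by exact_mod_cast hk.1
      have : Real.log k ≤ Real.log t := Real.log_le_log hk0 (by exact_mod_cast hk.2)
      have h2 : e1 k = chi (fun q => p < q) k := by
        simp only [he1]; rw [if_neg (by linarith)]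
      rw [h2]
      have := he2n k
      linarith
  -- pointwise estimates
  have hpt : ∀ k ∈ Ioc 0 X, ∑ d ∈ Ioc 0 (X / k), pp d ≤ D * (X / k / (1 + (Real.log X - Real.log k))) := by
    intro k hk
    rw [Finset.mem_Ioc] at hk
    have hk0 : (0:ℝ) < k := by exact_mod_cast hk.1
    have := HD ((X:ℝ)/k) (by rw [one_le_div hk0]; exact_mod_cast hk.2)
    rw [Nat.floor_div_eq_div, Real.log_div (by linarith) hk0.ne'] at this
    exact this
  have hE1 : ∑ k ∈ Ioc 0 X, e1 k * (X / k / (1 + (Real.log X - Real.log k))) ≤ 822 * (X * Real.log L / (1 + Real.log X)) := by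
    set z := ⌊Real.exp W⌋₊ with hz
    have hz1 : 1 ≤ z := by
      apply Nat.le_floor; push_cast; exact Real.one_le_exp hW0
    have hR := rough_recip p z hp.one_le hz1
    have hzW : Real.log z ≤ W := by
      rw [Real.log_le_iff_le_exp (by exact_mod_cast hz1)]
      exact Nat.floor_le (by positivity)
    have hRb : ∑ m ∈ Ioc 0 z, chi (fun q => p < q) m / m ≤ 411 * Real.log L := by
      have hlog2 := Real.log_two_gt_d9
      have h2p : Real.log 2 ≤ Real.log p := Real.log_le_log (by norm_num) hp2
      have h3 : Real.log (3 * p) ≤ 3 * Real.log p := by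
        rw [show 3 * Real.log p = Real.log ((p:ℝ)^3) by rw [Real.log_pow]; norm_num]
        apply Real.log_le_log (by positivity)
        nlinarith [mul_le_mul hp2 hp2 (by norm_num) (by linarith)]
      have hpp1 : Real.log p ≤ Real.log (p+1) := Real.log_le_log (by linarith) (by linarith)
      have hs0 : 0 ≤ ∑ m ∈ Ioc 0 z, chi (fun q => p < q) m / m :=
        Finset.sum_nonneg fun m _ => div_nonneg (chi_nonneg _ _) (by positivity)
      have h4 : Real.log p * ∑ m ∈ Ioc 0 z, chi (fun q => p < q) m / m ≤ 1 + (Real.log p + W) := by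
        have := mul_le_mul_of_nonneg_right hpp1 hs0
        linarith
      have h5 : 1 + (Real.log p + W) ≤ Real.log p * (411 * Real.log L) := by
        have a1 : W ≤ 408 * (Real.log p * Real.log L) := by
          rw [hW]; nlinarith
        have a2 : Real.log p ≤ Real.log p * Real.log L := by nlinarith
        nlinarith
      exact le_of_mul_le_mul_left (h4.trans h5) hlp
    calc ∑ k ∈ Ioc 0 X, e1 k * (X / k / (1 + (Real.log X - Real.log k))) 
        ≤ ∑ k ∈ Ioc 0 X, (e1 k / k) * (2 * (X / (1 + Real.log X))) := by
          apply Finset.sum_le_sum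
          intro k hk
          rw [Finset.mem_Ioc] at hk
          have hk0 : (0:ℝ) < k := by exact_mod_cast hk.1
          by_cases hb : W ≤ Real.log k
          · simp only [he1, if_pos hb]; simp
          · push Not at hb
            have h0 : (X:ℝ) / (1 + (Real.log X - Real.log k)) ≤ 2 * (X / (1 + Real.log X)) := by
              rw [mul_div_assoc', div_le_div_iff₀ (by linarith) (by linarith)]
              nlinarith
            calc e1 k * (X / k / (1 + (Real.log X - Real.log k))) = (e1 k / k) * (X / (1 + (Real.log X - Real.log k))) := by
                  field_simp
              _ ≤ _ := by
                  have : 0 ≤ e1 k / k := div_nonneg (he1n k) hk0.le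
                  gcongr
      _ = (∑ k ∈ Ioc 0 X, e1 k / k) * (2 * (X / (1 + Real.log X))) := by rw [Finset.sum_mul]
      _ ≤ (411 * Real.log L) * (2 * (X / (1 + Real.log X))) := by
          gcongr
          refine le_trans ?_ hRb
          have : ∑ k ∈ Ioc 0 X, e1 k / k = ∑ k ∈ (Ioc 0 X).filter (fun k : ℕ => ¬ W ≤ Real.log k), chi (fun q => p < q) k / k := by
            rw [Finset.sum_filter]
            apply Finset.sum_congr rfl
            intro k _
            simp only [he1]
            by_cases hb : W ≤ Real.log k
            · rw [if_pos hb, if_neg (not_not.mpr hb), zero_div]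
            · rw [if_neg hb, if_pos hb]
          rw [this]
          apply Finset.sum_le_sum_of_subset_of_nonneg
          · intro k hk
            rw [Finset.mem_filter, Finset.mem_Ioc] at hk
            rw [Finset.mem_Ioc]
            refine ⟨hk.1.1, ?_⟩
            apply Nat.le_floor
            have hk0 : (0:ℝ) < k := by exact_mod_cast hk.1.1
            rw [← Real.log_le_iff_le_exp hk0]
            linarith [not_le.mp hk.2]
          · intro k _ _; exact div_nonneg (chi_nonneg _ _) (by positivity)
      _ = _ := by ring
  have hE2 : ∑ k ∈ Ioc 0 X, e2 k * (X / k / (1 + (Real.log X - Real.log k))) ≤ 6 * C * (X * Real.log L / (1 + Real.log X)) := by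
    calc ∑ k ∈ Ioc 0 X, e2 k * (X / k / (1 + (Real.log X - Real.log k))) 
        ≤ ∑ k ∈ Ioc 0 X, (C * (X / (1 + Real.log X))) * (1 / (k * (1 + Real.log k)^2) + (L^4)⁻¹ * (1 + Real.log X) * (1 / k)) := by
          apply Finset.sum_le_sum
          intro k hk
          rw [Finset.mem_Ioc] at hk
          have hk0 : (0:ℝ) < k := by exact_mod_cast hk.1
          have hkl := hlog k
          have hkX : Real.log k ≤ Real.log X := Real.log_le_log hk0 (by exact_mod_cast hk.2)
          have h0 : (X:ℝ) / k / (1 + (Real.log X - Real.log k)) ≤ (X / (1 + Real.log X)) * ((1 + Real.log k) / k) := by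
            rw [div_mul_div_comm, div_div, div_le_div_iff₀ (by apply mul_pos hk0; linarith) (by positivity)]
            have : 1 + Real.log X ≤ (1 + Real.log k) * (1 + (Real.log X - Real.log k)) := by nlinarith
            calc (X:ℝ) * ((1 + Real.log X) * k) = (X * k) * (1 + Real.log X) := by ring
              _ ≤ (X * k) * ((1 + Real.log k) * (1 + (Real.log X - Real.log k))) := by gcongr
              _ = _ := by ring
          calc e2 k * (X / k / (1 + (Real.log X - Real.log k))) ≤ e2 k * ((X / (1 + Real.log X)) * ((1 + Real.log k) / k)) := by
                have := he2n k; gcongr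
            _ = (C * (X / (1 + Real.log X))) * (1 / (k * (1 + Real.log k)^2) + (L^4)⁻¹ * (1 + Real.log k) * (1 / k)) := by
                simp only [he2]; field_simp
            _ ≤ _ := by gcongr
      _ = (C * (X / (1 + Real.log X))) * (∑ k ∈ Ioc 0 X, (1:ℝ) / (k * (1 + Real.log k)^2) + (L^4)⁻¹ * (1 + Real.log X) * ∑ k ∈ Ioc 0 X, (1:ℝ) / k) := by
          rw [← Finset.mul_sum, Finset.sum_add_distrib, ← Finset.mul_sum]
      _ ≤ (C * (X / (1 + Real.log X))) * (2 + 4) := by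
          have h1 := bertrand_sum X hX
          have h2 := harm_le X
          have h3 : 0 ≤ 1 / (1 + Real.log X) := by positivity
          have h4 : (L^4)⁻¹ * (1 + Real.log X) * ∑ k ∈ Ioc 0 X, (1:ℝ) / k ≤ 4 := by
            calc _ ≤ (L^4)⁻¹ * (1 + Real.log X) * (1 + Real.log X) := by gcongr
              _ ≤ (L^4)⁻¹ * (2 * L) * (2 * L) := by gcongr
              _ = 4 * (L^2)⁻¹ := by field_simp; ring
              _ ≤ 4 * 1 := by gcongr; apply inv_le_one_of_one_le₀; exact one_le_pow₀ hL1
              _ = 4 := by norm_num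
          gcongr
          linarith
      _ ≤ _ := by
          have : (X:ℝ) / (1 + Real.log X) ≤ X * Real.log L / (1 + Real.log X) := by
            gcongr; nlinarith
          nlinarith
  calc ∑ d ∈ Ioc 0 X, pp d * |MS (fun q => p < q) (X / d)| 
      ≤ ∑ d ∈ Ioc 0 X, pp d * ∑ k ∈ Ioc 0 (X / d), (e1 k + e2 k) := by
        apply Finset.sum_le_sum
        intro d hd
        rw [Finset.mem_Ioc] at hd
        apply mul_le_mul_of_nonneg_left _ (pp_nonneg d)
        exact hMS _ ((Nat.one_le_div_iff hd.1).mpr hd.2) (Nat.div_le_self _ _)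
    _ = ∑ k ∈ Ioc 0 X, (e1 k + e2 k) * ∑ d ∈ Ioc 0 (X / k), pp d := hyper_swap X _ _
    _ ≤ ∑ k ∈ Ioc 0 X, (e1 k + e2 k) * (D * (X / k / (1 + (Real.log X - Real.log k)))) := by
        apply Finset.sum_le_sum
        intro k hk
        exact mul_le_mul_of_nonneg_left (hpt k hk) (add_nonneg (he1n k) (he2n k))
    _ = D * (∑ k ∈ Ioc 0 X, e1 k * (X / k / (1 + (Real.log X - Real.log k))) + ∑ k ∈ Ioc 0 X, e2 k * (X / k / (1 + (Real.log X - Real.log k)))) := by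
        rw [← Finset.sum_add_distrib, Finset.mul_sum]
        apply Finset.sum_congr rfl; intro k _; ring
    _ ≤ D * (822 * (X * Real.log L / (1 + Real.log X)) + 6 * C * (X * Real.log L / (1 + Real.log X))) := by gcongr
    _ = _ := by ring

lemma small_p : ∃ C > 0, ∀ (p : ℕ) (x : ℝ), p.Prime → 16 ≤ x → 
    600 * Real.log (Real.log x) * Real.log (3 * p) ≤ Real.log x →
    ∑ d ∈ Ioc 0 (⌊x⌋₊ / p), pp d * |MS (fun q => p < q) (⌊x⌋₊ / p / d)| ≤ C * ((1 / p) * (x * Real.log (Real.log x) / Real.log x)) := by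
  obtain ⟨C, hC, HC⟩ := small_p_core
  refine ⟨2 * C, by positivity, ?_⟩
  intro p x hp hx h
  have hL : Real.exp 1 ≤ Real.log x := by
    have h1 : Real.log 16 ≤ Real.log x := Real.log_le_log (by norm_num) hx
    have h2 : Real.log 16 = 4 * Real.log 2 := by
      rw [show (16:ℝ) = 2^4 by norm_num, Real.log_pow]; norm_num
    have := Real.log_two_gt_d9
    have := Real.exp_one_lt_d9
    linarith
  set L := Real.log x with hLdef
  have he : (2:ℝ) ≤ Real.exp 1 := by have := Real.add_one_le_exp 1; linarith
  have hL1 : 2 ≤ L := he.trans hL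
  have hll : 1 ≤ Real.log L := by
    rw [Real.le_log_iff_exp_le (by linarith)]; exact hL
  have hl3p := log3p p hp.one_le
  have hp2 : (2:ℝ) ≤ p := by exact_mod_cast hp.two_le
  have h3pL : 600 * Real.log (3 * p) ≤ L := by nlinarith
  have hpx : (3 * p:ℝ) ≤ x := by
    rw [← Real.log_le_log_iff (by positivity) (by linarith)]
    linarith
  have hpN : p ≤ ⌊x⌋₊ := Nat.le_floor (by linarith)
  set X := ⌊x⌋₊ / p with hXd
  have hX : 1 ≤ X := (Nat.one_le_div_iff hp.pos).mpr hpN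
  have hX1 : (1:ℝ) ≤ X := by exact_mod_cast hX
  have hXle : (X:ℝ) ≤ x / p := by
    calc (X:ℝ) ≤ (⌊x⌋₊:ℝ) / p := Nat.cast_div_le
      _ ≤ x / p := by gcongr; exact Nat.floor_le (by linarith)
  have hXx : (X:ℝ) ≤ x := hXle.trans (div_le_self (by linarith) (by linarith))
  have hXge : x ≤ 3 * p * X := by
    have h1 : ⌊x⌋₊ + 1 ≤ p * (X + 1) := Nat.lt_mul_div_succ _ hp.pos
    have h2 : x < ⌊x⌋₊ + 1 := Nat.lt_floor_add_one x
    have h3 : (⌊x⌋₊:ℝ) + 1 ≤ p * (X + 1) := by exact_mod_cast h1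
    nlinarith
  have hlX : L ≤ Real.log (3 * p) + Real.log X := by
    rw [← Real.log_mul (by positivity) (by positivity)]
    exact Real.log_le_log (by linarith) hXge
  have hlXL : Real.log X ≤ L := Real.log_le_log (by linarith) hXx
  have hhalf : L / 2 ≤ Real.log X := by linarith
  have := HC p X L hp hX hL (by linarith) hlXL (by nlinarith)
  refine this.trans ?_
  calc C * (X * Real.log L / (1 + Real.log X)) ≤ C * ((x / p) * Real.log L / (L / 2)) := by
        gcongr; linarith
    _ = _ := by field_simp

end MOB

open Finset ArithmeticFunction Real

namespace MOB

lemma log_chi_sum (P : ℕ → Prop) (N : ℕ) :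
    ∑ n ∈ Ioc 0 N, chi P n * Real.log n ≤ 6 * (N * ∑ m ∈ Ioc 0 N, chi P m / m) := by
  have h1 : ∑ n ∈ Ioc 0 N, chi P n * Real.log n ≤ ∑ m ∈ Ioc 0 N, chi P m * ∑ d ∈ Ioc 0 (N / m), vonMangoldt d := by
    have e : ∑ n ∈ Ioc 0 N, chi P n * Real.log n = ∑ n ∈ Ioc 0 N, ∑ d ∈ (Ioc 0 N).filter (fun d => d ∣ n), chi P n * vonMangoldt d := by
      apply Finset.sum_congr rfl
      intro n hn
      rw [Finset.mem_Ioc] at hn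
      rw [← Finset.mul_sum, ← vonMangoldt_sum]
      congr 1
      apply Finset.sum_congr _ (fun _ _ => rfl)
      ext d
      rw [Nat.mem_divisors, Finset.mem_filter, Finset.mem_Ioc]
      constructor
      · rintro ⟨a, b⟩; exact ⟨⟨Nat.pos_of_dvd_of_pos a hn.1, (Nat.le_of_dvd hn.1 a).trans hn.2⟩, a⟩
      · rintro ⟨_, a⟩; exact ⟨a, by omega⟩
    rw [e, Finset.sum_comm' (t' := Ioc 0 N) (s' := fun d => (Ioc 0 N).filter (fun n => d ∣ n))
      (by intro n d; simp only [Finset.mem_filter]; tauto)]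
    have e2 : ∑ m ∈ Ioc 0 N, chi P m * ∑ d ∈ Ioc 0 (N / m), vonMangoldt d = 
        ∑ d ∈ Ioc 0 N, vonMangoldt d * ∑ m ∈ Ioc 0 (N / d), chi P m := hyper_swap N _ _
    rw [e2]
    apply Finset.sum_le_sum
    intro d hd
    rw [Finset.mem_Ioc] at hd
    have e3 : (Ioc 0 N).filter (fun n => d ∣ n) = (Ioc 0 (N / d)).image (fun m => d * m) := by
      ext n
      simp only [Finset.mem_filter, Finset.mem_Ioc, Finset.mem_image]
      constructor
      · rintro ⟨⟨a, b⟩, m, rfl⟩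
        exact ⟨m, ⟨Nat.pos_of_mul_pos_left a, (Nat.le_div_iff_mul_le hd.1).mpr (by rw [mul_comm]; exact b)⟩, rfl⟩
      · rintro ⟨m, ⟨a, b⟩, rfl⟩
        rw [Nat.le_div_iff_mul_le hd.1, mul_comm] at b
        exact ⟨⟨Nat.mul_pos hd.1 a, b⟩, dvd_mul_right _ _⟩
    rw [e3, Finset.sum_image (fun a _ b _ h => Nat.eq_of_mul_eq_mul_left hd.1 h), Finset.mul_sum]
    apply Finset.sum_le_sum
    intro m hm
    rw [Finset.mem_Ioc] at hm
    rw [chi_mul P (by omega) (by omega), mul_comm]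
    apply mul_le_mul_of_nonneg_left _ vonMangoldt_nonneg
    have := chi_nonneg P m
    have := chi_le_one P d
    nlinarith
  refine h1.trans ?_
  rw [Finset.mul_sum, Finset.mul_sum]
  apply Finset.sum_le_sum
  intro m hm
  have h2 : ∑ d ∈ Ioc 0 (N / m), vonMangoldt d ≤ 6 * (N / m) := by
    have h3 := Chebyshev.psi_le_const_mul_self (x := (N:ℝ)/m) (by positivity)
    unfold Chebyshev.psi at h3
    rw [Nat.floor_div_eq_div] at h3
    refine h3.trans ?_
    have : Real.log 4 = 2 * Real.log 2 := by
      rw [show (4:ℝ) = 2^2 by norm_num, Real.log_pow]; norm_num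
    have := Real.log_two_lt_d9
    gcongr
    linarith
  calc chi P m * ∑ d ∈ Ioc 0 (N / m), vonMangoldt d ≤ chi P m * (6 * (N / m)) :=
        mul_le_mul_of_nonneg_left h2 (chi_nonneg P m)
    _ = _ := by ring

/-- Contribution of integers with no small prime factor. -/
lemma large_p (p : ℕ) (x : ℝ) (hp : 1 ≤ p) (hx : 16 ≤ x) (hpx : (p:ℝ) ≤ x)
    (h : Real.log x ≤ 600 * Real.log (Real.log x) * Real.log (3 * (p + 1))) (hl : 1 ≤ Real.log (Real.log x)) (hL : 2 ≤ Real.log x) :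
    ∑ n ∈ Ioc 0 ⌊x⌋₊, chi (fun q => p < q) n * (n.primeFactors.card : ℝ) ≤ 
      (7 * 5400 * 1800) * (x * (Real.log (Real.log x)) ^ 2 / Real.log x) := by
  set L := Real.log x
  set ll := Real.log L
  set N := ⌊x⌋₊
  have hp1 : (1:ℝ) ≤ p := by exact_mod_cast hp
  have hNx : (N:ℝ) ≤ x := Nat.floor_le (by linarith)
  have hN : 1 ≤ N := Nat.le_floor (by push_cast; linarith)
  have hN1 : (1:ℝ) ≤ N := by exact_mod_cast hN
  have h3 : Real.log (3 * (p+1)) ≤ 3 * Real.log (p+1) := by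
    rw [show 3 * Real.log ((p:ℝ)+1) = Real.log (((p:ℝ)+1)^3) by rw [Real.log_pow]; norm_num]
    apply Real.log_le_log (by positivity)
    nlinarith [sq_nonneg ((p:ℝ)-1)]
  have hlp : 0 < Real.log (p+1) := Real.log_pos (by linarith)
  have hLp : L ≤ 1800 * ll * Real.log (p+1) := by nlinarith
  set R := ∑ m ∈ Ioc 0 N, chi (fun q => p < q) m / m with hR
  have hR0 : 0 ≤ R := Finset.sum_nonneg fun m _ => div_nonneg (chi_nonneg _ _) (by positivity)
  have hRb : R ≤ 5400 * ll := by
    have h1 := rough_recip p N hp hN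
    rw [← hR] at h1
    have h2 : Real.log p ≤ L := Real.log_le_log (by linarith) hpx
    have h4 : Real.log N ≤ L := Real.log_le_log (by linarith) hNx
    have h5 : Real.log (p+1) * R ≤ Real.log (p+1) * (5400 * ll) := by nlinarith
    exact le_of_mul_le_mul_left h5 hlp
  have hcount : L * ∑ n ∈ Ioc 0 N, chi (fun q => p < q) n ≤ 7 * (x * R) := by
    have h1 := log_chi_sum (fun q => p < q) N
    rw [← hR] at h1
    have h2 : L * ∑ n ∈ Ioc 0 N, chi (fun q => p < q) n ≤ ∑ n ∈ Ioc 0 N, chi (fun q => p < q) n * Real.log n + x * R := by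
      rw [hR, Finset.mul_sum, Finset.mul_sum, ← Finset.sum_add_distrib]
      apply Finset.sum_le_sum
      intro n hn
      rw [Finset.mem_Ioc] at hn
      have hn0 : (0:ℝ) < n := by exact_mod_cast hn.1
      have h3 : Real.log (x / n) ≤ x / n := by
        have := Real.log_le_sub_one_of_pos (x := x / n) (by positivity); linarith
      rw [Real.log_div (by linarith) hn0.ne'] at h3
      calc L * chi (fun q => p < q) n ≤ (Real.log n + x / n) * chi (fun q => p < q) n := by
            apply mul_le_mul_of_nonneg_right _ (chi_nonneg _ _)
            change Real.log x ≤ _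
            linarith
        _ = _ := by ring
    have h4 : (N:ℝ) * R ≤ x * R := by gcongr
    linarith
  have hω : ∀ n ∈ Ioc 0 N, chi (fun q => p < q) n * (n.primeFactors.card : ℝ) ≤ chi (fun q => p < q) n * (1800 * ll) := by
    intro n hn
    rw [Finset.mem_Ioc] at hn
    rcases chi_cases (fun q => p < q) n with h0 | ⟨h1, h2, h3⟩
    · rw [h0, zero_mul, zero_mul]
    · rw [h1, one_mul, one_mul]
      have h5 : (p+1) ^ n.primeFactors.card ≤ n := by
        calc (p+1) ^ n.primeFactors.card ≤ ∏ q ∈ n.primeFactors, q := by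
              rw [← Finset.prod_const]
              apply Finset.prod_le_prod' 
              intro q hq
              rw [Nat.mem_primeFactors] at hq
              exact h3 q hq.1 hq.2.1
          _ ≤ n := Nat.le_of_dvd hn.1 (Nat.prod_primeFactors_dvd n)
      have h6 : (n.primeFactors.card : ℝ) * Real.log (p+1) ≤ L := by
        rw [← Real.log_pow]
        apply Real.log_le_log (by positivity)
        calc ((p:ℝ)+1) ^ n.primeFactors.card ≤ n := by exact_mod_cast h5
          _ ≤ N := by exact_mod_cast hn.2
          _ ≤ x := hNx
      have h7 := h6.trans hLp
      exact le_of_mul_le_mul_right h7 hlp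
  calc ∑ n ∈ Ioc 0 N, chi (fun q => p < q) n * (n.primeFactors.card : ℝ) 
      ≤ ∑ n ∈ Ioc 0 N, chi (fun q => p < q) n * (1800 * ll) := Finset.sum_le_sum hω
    _ = (∑ n ∈ Ioc 0 N, chi (fun q => p < q) n) * (1800 * ll) := by rw [Finset.sum_mul]
    _ ≤ (7 * (x * R) / L) * (1800 * ll) := by
        gcongr
        rw [le_div_iff₀ (by linarith), mul_comm]; exact hcount
    _ ≤ (7 * (x * (5400 * ll)) / L) * (1800 * ll) := by gcongr
    _ = _ := by ring

end MOB

open Finset ArithmeticFunction Real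

namespace MOB

lemma fiber (p N : ℕ) (hp : p.Prime) :
    ∑ n ∈ (Icc 2 N).filter (fun n => n.minFac = p), (moebius n : ℝ) * (n.primeFactors.card : ℝ) =
      - ∑ m ∈ Ioc 0 (N / p), mf (fun q => p < q) m * (1 + (m.primeFactors.card : ℝ)) := by
  classical
  have e3 : (Icc 2 N).filter (fun n => n.minFac = p) = ((Ioc 0 (N / p)).image (fun m => p * m)).filter (fun n => n.minFac = p) := by
    ext n
    simp only [Finset.mem_filter, Finset.mem_Ioc, Finset.mem_image, Finset.mem_Icc]
    constructor
    · rintro ⟨⟨a, b⟩, c⟩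
      refine ⟨?_, c⟩
      obtain ⟨m, rfl⟩ : p ∣ n := c ▸ Nat.minFac_dvd n
      exact ⟨m, ⟨Nat.pos_of_mul_pos_left (lt_of_lt_of_le (by norm_num) a), (Nat.le_div_iff_mul_le hp.pos).mpr (by rw [mul_comm]; exact b)⟩, rfl⟩
    · rintro ⟨⟨m, ⟨a, b⟩, rfl⟩, c⟩
      rw [Nat.le_div_iff_mul_le hp.pos, mul_comm] at b
      exact ⟨⟨hp.two_le.trans (Nat.le_mul_of_pos_right p a), b⟩, c⟩
  rw [e3, Finset.sum_filter, Finset.sum_image (fun a _ b _ h => Nat.eq_of_mul_eq_mul_left hp.pos h), ← Finset.sum_neg_distrib]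
  apply Finset.sum_congr rfl
  intro m hm
  rw [Finset.mem_Ioc] at hm
  have hm0 : m ≠ 0 := by omega
  rw [mf_apply]
  by_cases hpm : p ∣ m
  · rw [chi_eq_zero hp hpm (by simp)]
    have : moebius (p * m) = 0 := by
      apply moebius_eq_zero_of_not_squarefree
      intro hs
      exact hp.not_isUnit (hs p (Nat.mul_dvd_mul_left p hpm))
    rw [this]; simp
  · have hc : Nat.Coprime p m := (Nat.Prime.coprime_iff_not_dvd hp).mpr hpm
    have hμ : (moebius (p * m) : ℝ) = - (moebius m : ℝ) := by
      rw [isMultiplicative_moebius.map_mul_of_coprime hc, moebius_apply_prime hp]; push_cast; ring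
    have hω : ((p * m).primeFactors.card : ℝ) = 1 + (m.primeFactors.card : ℝ) := by
      rw [hc.primeFactors_mul, Finset.card_union_of_disjoint hc.disjoint_primeFactors, hp.primeFactors]
      simp
    split_ifs with h
    · rw [chi_eq_one hm0]
      · rw [hμ, hω]; ring
      · intro q hq hd
        have h1 : (p*m).minFac ≤ q := Nat.minFac_le_of_dvd hq.two_le (hd.mul_left p)
        rw [h] at h1
        rcases h1.lt_or_eq with h2 | h2
        · exact h2
        · exact absurd (h2 ▸ hd) hpm
    · rcases chi_cases (fun q => p < q) m with h0 | ⟨h1, h2, h3⟩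
      · rw [h0]; ring
      · exfalso
        apply h
        have h4 : p * m ≠ 1 := by
          intro h; exact hp.one_lt.ne' (Nat.dvd_one.mp (h ▸ dvd_mul_right p m))
        have h5 := Nat.minFac_prime h4
        rcases (Nat.Prime.dvd_mul h5).mp (Nat.minFac_dvd (p*m)) with h6 | h6
        · exact (Nat.prime_dvd_prime_iff_eq h5 hp).mp h6
        · have h7 := h3 _ h5 h6
          have h8 := Nat.minFac_le_of_dvd hp.two_le (dvd_mul_right p m)
          omega

lemma final (Q : ℕ → Prop) [DecidablePred Q] : ∃ C > (0 : ℝ), ∀ x : ℝ, 16 ≤ x →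
      |∑ n ∈ (Finset.Icc 2 ⌊x⌋₊).filter (fun n => Q n.minFac),
          (moebius n : ℝ) * (n.primeFactors.card : ℝ)|
        ≤ C * x * (Real.log (Real.log x)) ^ 4 / Real.log x := by
  classical
  obtain ⟨C, hC, HC⟩ := small_p
  refine ⟨C * 27 + 7 * 5400 * 1800, by positivity, ?_⟩
  intro x hx
  have hLe : Real.exp 1 ≤ Real.log x := by
    have h1 : Real.log 16 ≤ Real.log x := Real.log_le_log (by norm_num) hx
    have h2 : Real.log 16 = 4 * Real.log 2 := by
      rw [show (16:ℝ) = 2^4 by norm_num, Real.log_pow]; norm_num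
    have := Real.log_two_gt_d9
    have := Real.exp_one_lt_d9
    linarith
  have he : (2:ℝ) ≤ Real.exp 1 := by have := Real.add_one_le_exp 1; linarith
  have hL2 : 2 ≤ Real.log x := he.trans hLe
  have hll : 1 ≤ Real.log (Real.log x) := by
    rw [Real.le_log_iff_exp_le (by linarith)]; exact hLe
  set L := Real.log x with hL
  set ll := Real.log L with hlld
  set N := ⌊x⌋₊ with hN
  set f : ℕ → ℝ := fun n => (moebius n : ℝ) * (n.primeFactors.card : ℝ) with hf
  set y := Real.exp (L / (600 * ll)) / 3 with hy
  have hy0 : 0 < y := by positivity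
  have hyx : y ≤ x := by
    have h1 : L / (600 * ll) ≤ L := div_le_self (by linarith) (by linarith)
    have h2 : Real.exp (L / (600 * ll)) ≤ x := by
      calc _ ≤ Real.exp L := Real.exp_le_exp.mpr h1
        _ = x := Real.exp_log (by linarith)
    rw [hy]; linarith [Real.exp_pos (L / (600 * ll))]
  set p0 := max 1 ⌊y⌋₊ with hp0
  have hp01 : 1 ≤ p0 := le_max_left _ _
  have hp0x : (p0:ℝ) ≤ x := by
    rw [hp0, Nat.cast_max]
    apply max_le
    · push_cast; linarith
    · exact (Nat.floor_le hy0.le).trans hyx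
  -- small primes
  have hsm : ∀ p : ℕ, p.Prime → p ≤ p0 → 600 * ll * Real.log (3 * p) ≤ L := by
    intro p hp hpp
    have h1 : p ≤ ⌊y⌋₊ := by
      rcases le_max_iff.mp hpp with h | h
      · have := hp.two_le; omega
      · exact h
    have h2 : (p:ℝ) ≤ y := (Nat.cast_le.mpr h1).trans (Nat.floor_le hy0.le)
    have hp2 : (0:ℝ) < p := by exact_mod_cast hp.pos
    have h3 : Real.log (3 * p) ≤ L / (600 * ll) := by
      rw [Real.log_le_iff_le_exp (by positivity)]
      rw [hy] at h2; linarith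
    rw [le_div_iff₀ (by positivity)] at h3
    linarith
  have hlg : L ≤ 600 * ll * Real.log (3 * (p0 + 1)) := by
    have h1 : y ≤ p0 + 1 := by
      have h2 := Nat.lt_floor_add_one y
      have h3 : (⌊y⌋₊:ℝ) ≤ p0 := by exact_mod_cast le_max_right _ _
      linarith
    have h3 : L / (600 * ll) ≤ Real.log (3 * (p0 + 1)) := by
      rw [Real.le_log_iff_exp_le (by positivity)]
      rw [hy] at h1; linarith
    rw [div_le_iff₀ (by positivity)] at h3
    linarith
  set A := (Finset.Icc 2 N).filter (fun n => Q n.minFac) with hA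
  have hsplit : ∑ n ∈ A, f n = ∑ n ∈ A.filter (fun n => n.minFac ≤ p0), f n + ∑ n ∈ A.filter (fun n => ¬ n.minFac ≤ p0), f n :=
    (Finset.sum_filter_add_sum_filter_not A _ f).symm
  have hbig : |∑ n ∈ A.filter (fun n => ¬ n.minFac ≤ p0), f n| ≤ (7 * 5400 * 1800) * (x * ll ^ 2 / L) := by
    refine le_trans ?_ (large_p p0 x hp01 hx hp0x hlg hll hL2)
    refine (Finset.abs_sum_le_sum_abs _ _).trans ?_
    calc ∑ n ∈ A.filter (fun n => ¬ n.minFac ≤ p0), |f n| 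
        ≤ ∑ n ∈ A.filter (fun n => ¬ n.minFac ≤ p0), chi (fun q => p0 < q) n * (n.primeFactors.card : ℝ) := by
          apply Finset.sum_le_sum
          intro n hn
          simp only [hA, Finset.mem_filter, Finset.mem_Icc] at hn
          rw [chi_eq_one (by omega), one_mul, hf]
          · simp only [abs_mul, Nat.abs_cast]
            have := mu_abs_le n
            calc _ ≤ 1 * (n.primeFactors.card : ℝ) := by gcongr
              _ = _ := one_mul _
          · intro q hq hd
            have := Nat.minFac_le_of_dvd hq.two_le hd
            omega
      _ ≤ _ := by
          apply Finset.sum_le_sum_of_subset_of_nonneg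
          · intro n hn
            simp only [hA, Finset.mem_filter, Finset.mem_Icc] at hn
            rw [Finset.mem_Ioc]; omega
          · intro n _ _; exact mul_nonneg (chi_nonneg _ _) (by positivity)
  have hsmall : |∑ n ∈ A.filter (fun n => n.minFac ≤ p0), f n| ≤ C * 27 * (x * ll ^ 2 / L) := by
    have hmaps : ∀ n ∈ A.filter (fun n => n.minFac ≤ p0), n.minFac ∈ (p0+1).primesBelow := by
      intro n hn
      simp only [hA, Finset.mem_filter, Finset.mem_Icc] at hn
      rw [Nat.mem_primesBelow]
      exact ⟨by omega, Nat.minFac_prime (by omega)⟩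
    rw [← Finset.sum_fiberwise_of_maps_to hmaps]
    refine (Finset.abs_sum_le_sum_abs _ _).trans ?_
    calc ∑ p ∈ (p0+1).primesBelow, |∑ n ∈ (A.filter (fun n => n.minFac ≤ p0)).filter (fun n => n.minFac = p), f n|
        ≤ ∑ p ∈ (p0+1).primesBelow, (1:ℝ) / p * (C * (x * ll / L)) := by
          apply Finset.sum_le_sum
          intro p hp
          rw [Nat.mem_primesBelow] at hp
          by_cases hQ : Q p
          · have e : (A.filter (fun n => n.minFac ≤ p0)).filter (fun n => n.minFac = p) = (Icc 2 N).filter (fun n => n.minFac = p) := by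
              ext n
              simp only [hA, Finset.mem_filter]
              constructor
              · rintro ⟨⟨⟨a, _⟩, _⟩, b⟩; exact ⟨a, b⟩
              · rintro ⟨a, b⟩; exact ⟨⟨⟨a, b ▸ hQ⟩, by omega⟩, b⟩
            rw [e, hf, fiber p N hp.2, abs_neg]
            refine (omega_sum _ _).trans ?_
            refine (HC p x hp.2 hx (hsm p hp.2 (by omega))).trans (le_of_eq ?_)
            ring
          · have e : (A.filter (fun n => n.minFac ≤ p0)).filter (fun n => n.minFac = p) = ∅ := by
              apply Finset.eq_empty_of_forall_notMem
              intro n hn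
              simp only [hA, Finset.mem_filter] at hn
              exact hQ (hn.2 ▸ hn.1.1.2)
            rw [e, Finset.sum_empty, abs_zero]
            positivity
      _ = (∑ p ∈ (p0+1).primesBelow, (1:ℝ) / p) * (C * (x * ll / L)) := by rw [Finset.sum_mul]
      _ ≤ (27 * ll) * (C * (x * ll / L)) := by
          gcongr
          refine (prime_recip p0 hp01).trans ?_
          have h1 : Real.log (3 * p0) ≤ 2 * L := by
            have hp0r : (0:ℝ) < p0 := by exact_mod_cast hp01
            rw [show 2 * L = Real.log (x^2) by rw [Real.log_pow, hL]; norm_num]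
            apply Real.log_le_log (by positivity)
            nlinarith
          have h2 := log3p p0 hp01
          have h3 : Real.log (7 * Real.log (3 * p0)) ≤ 9 * ll := by
            rw [show 9 * ll = Real.log (L^9) by rw [Real.log_pow, hlld]; norm_num]
            apply Real.log_le_log (by linarith)
            have h4 : (2:ℝ)^8 ≤ L^8 := by gcongr
            have : L^9 = L^8 * L := by ring
            nlinarith
          linarith
      _ = _ := by ring
  have hfin : x * ll ^ 2 / L ≤ x * ll ^ 4 / L := by
    gcongr x * ?_ / L
    exact pow_le_pow_right₀ hll (by norm_num)
  rw [hsplit]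
  calc _ ≤ |∑ n ∈ A.filter (fun n => n.minFac ≤ p0), f n| + |∑ n ∈ A.filter (fun n => ¬ n.minFac ≤ p0), f n| := abs_add_le _ _
    _ ≤ C * 27 * (x * ll ^ 2 / L) + (7 * 5400 * 1800) * (x * ll ^ 2 / L) := add_le_add hsmall hbig
    _ = (C * 27 + 7 * 5400 * 1800) * (x * ll ^ 2 / L) := by ring
    _ ≤ (C * 27 + 7 * 5400 * 1800) * (x * ll ^ 4 / L) := by gcongr
    _ = _ := by ring

end MOB

/-- For fixed `1 ≤ ℓ ≤ k` with `gcd(ℓ,k) = 1`, there is `C > 0` with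
`|Σ_{2 ≤ n ≤ x, p(n) ≡ ℓ (mod k)} μ(n) ω(n)| ≤ C x (log log x)⁴ / log x`
for all `x ≥ 16`, where `p(n)` is the smallest prime factor of `n`. -/
theorem moebius_omega_smallest_factor_progression_bound
    (k ℓ : ℕ) (hl : 1 ≤ ℓ) (hlk : ℓ ≤ k) (hgcd : Nat.gcd ℓ k = 1) :
    ∃ C > (0 : ℝ), ∀ x : ℝ, 16 ≤ x →
      |∑ n ∈ (Finset.Icc 2 ⌊x⌋₊).filter (fun n => n.minFac ≡ ℓ [MOD k]),
          (moebius n : ℝ) * (n.primeFactors.card : ℝ)|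
        ≤ C * x * (Real.log (Real.log x)) ^ 4 / Real.log x := by
  exact MOB.final (fun m => m ≡ ℓ [MOD k])
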